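/- Let Σ be a fan in ℝ^n satisfying conditions (2.9.1) and (2.9.2). For each 1 ≤ i ≤ r, each r-tuple D = (d_1,…,d_r) of positive integers, and any admissible choice of the pair (φ_D, x_D), the stabilization map s_{D,i} : Pol*_D(S¹,X_Σ) → Pol*_{D+e_i}(S¹,X_Σ) is a homotopy equivalence through dimension d(D,Σ) = 2(r_min(Σ)−1)·d_min − 2. -/

import Mathlib

open scoped BigOperators
attribute [local instance] Classical.propDecidable

noncomputable section

namespace Toric


/-! ### Cones and fans -/

/-- The real vector associated to an integer vector. -/
def zr {n : ℕ} (v : Fin n → ℤ) : Fin n → ℝ := fun i => (v i : ℝ)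

/-- A convex rational polyhedral cone in `ℝ^n`. -/
def IsRatCone {n : ℕ} (σ : Set (Fin n → ℝ)) : Prop :=
  ∃ s : Finset (Fin n → ℤ),
    σ = {x | ∃ lam : (Fin n → ℤ) → ℝ, (∀ v, 0 ≤ lam v) ∧ x = ∑ v ∈ s, lam v • zr v}

/-- A cone is strongly convex if `σ ∩ (-σ) = {0}`. -/
def StronglyConvex {n : ℕ} (σ : Set (Fin n → ℝ)) : Prop := σ ∩ (-σ) = {0}

/-- `τ` is a face of `σ`, cut out by a linear form nonnegative on `σ`. -/
def IsFaceOf {n : ℕ} (τ σ : Set (Fin n → ℝ)) : Prop :=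
  ∃ L : (Fin n → ℝ) →ₗ[ℝ] ℝ, (∀ x ∈ σ, 0 ≤ L x) ∧ τ = σ ∩ {x | L x = 0}

/-- A fan in `ℝ^n`: a finite collection of strongly convex rational polyhedral cones,
closed under taking faces, such that the intersection of two cones is a face of each;
we also require that it strictly contains `{0}`. -/
structure Fan (n : ℕ) where
  cones : Set (Set (Fin n → ℝ))
  finite : cones.Finite
  ratCone : ∀ σ ∈ cones, IsRatCone σ
  stronglyConvex : ∀ σ ∈ cones, StronglyConvex σ
  face_mem : ∀ σ ∈ cones, ∀ τ, IsFaceOf τ σ → τ ∈ cones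
  inter_face : ∀ σ ∈ cones, ∀ τ ∈ cones, IsFaceOf (σ ∩ τ) σ
  zero_mem : ({0} : Set (Fin n → ℝ)) ∈ cones
  nontrivial : cones ≠ {({0} : Set (Fin n → ℝ))}

/-- A fan is complete if its cones cover `ℝ^n`. -/
def Fan.Complete {n : ℕ} (F : Fan n) : Prop := ⋃₀ F.cones = Set.univ

/-- A fan is non-singular if each of its cones is spanned by part of a `ℤ`-basis of `ℤ^n`. -/
def Fan.NonSingular {n : ℕ} (F : Fan n) : Prop :=
  ∀ σ ∈ F.cones, ∃ (b : Module.Basis (Fin n) ℤ (Fin n → ℤ)) (s : Finset (Fin n)),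
    σ = {x | ∃ lam : Fin n → ℝ, (∀ i, 0 ≤ lam i) ∧ x = ∑ i ∈ s, lam i • zr (b i)}

/-- The ray (one-dimensional cone) generated by a vector. -/
def ray {n : ℕ} (v : Fin n → ℝ) : Set (Fin n → ℝ) := {x | ∃ t : ℝ, 0 ≤ t ∧ x = t • v}

/-- The cone spanned by the vectors `n_i`, `i ∈ s`. -/
def coneIdx {n r : ℕ} (N : Fin r → Fin n → ℤ) (s : Finset (Fin r)) : Set (Fin n → ℝ) :=
  {x | ∃ lam : Fin r → ℝ, (∀ i, 0 ≤ lam i) ∧ x = ∑ i ∈ s, lam i • zr (N i)}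

/-- A point of `ℝ^n` lying in the lattice `ℤ^n`. -/
def IsLatticePoint {n : ℕ} (x : Fin n → ℝ) : Prop := ∀ i, ∃ m : ℤ, x i = (m : ℝ)

/-- `N 1, …, N r` is the (complete, repetition-free) list of primitive generators of the
one-dimensional cones of the fan `F`. -/
structure IsPrimGens {n r : ℕ} (F : Fan n) (N : Fin r → Fin n → ℤ) : Prop where
  ray_mem : ∀ k, ray (zr (N k)) ∈ F.cones
  ne_zero : ∀ k, N k ≠ 0
  primitive : ∀ k, ray (zr (N k)) ∩ {x | IsLatticePoint x}
      = {x | ∃ c : ℕ, x = (c : ℝ) • zr (N k)}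
  inj : Function.Injective N
  complete : ∀ σ ∈ F.cones, Module.finrank ℝ (Submodule.span ℝ σ) = 1 →
      ∃ k, σ = ray (zr (N k))

/-- Condition (2.9.1): a positive integral relation among the primitive generators. -/
def Cond1 {n r : ℕ} (N : Fin r → Fin n → ℤ) : Prop :=
  ∃ d : Fin r → ℕ, (∀ k, 0 < d k) ∧ ∑ k, (d k : ℤ) • N k = 0

/-- Condition (2.9.2): the primitive generators span `ℤ^n` over `ℤ`. -/
def Cond2 {n r : ℕ} (N : Fin r → Fin n → ℤ) : Prop :=
  Submodule.span ℤ (Set.range N) = ⊤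

/-- The underlying simplicial complex `K_Σ` of a fan. -/
def KC {n r : ℕ} (F : Fan n) (N : Fin r → Fin n → ℤ) : Set (Finset (Fin r)) :=
  {s | coneIdx N s ∈ F.cones}

/-- A primitive set: it spans no cone of the fan, but every proper subset does. -/
def PrimitiveSet {r : ℕ} (K : Set (Finset (Fin r))) (s : Finset (Fin r)) : Prop :=
  s ∉ K ∧ ∀ t ⊂ s, t ∈ K

/-- `r_min`: the minimal cardinality of a primitive set. -/
def rmin {r : ℕ} (K : Set (Finset (Fin r))) : ℕ :=
  sInf {m | ∃ s : Finset (Fin r), PrimitiveSet K s ∧ s.card = m}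

/-- `d_min = min {d_1, …, d_r}`. -/
def dmin {r : ℕ} (D : Fin r → ℕ) : ℕ := sInf (Set.range D)

/-- The stability dimension `d(D,Σ) = 2(r_min − 1) d_min − 2`. -/
def dBound {r : ℕ} (K : Set (Finset (Fin r))) (D : Fin r → ℕ) : ℤ :=
  2 * ((rmin K : ℤ) - 1) * (dmin D : ℤ) - 2

/-- The connectivity bound `C_D(Σ) = 2(r_min − 1) d_min − 1`. -/
def CBound {r : ℕ} (K : Set (Finset (Fin r))) (D : Fin r → ℕ) : ℤ :=
  2 * ((rmin K : ℤ) - 1) * (dmin D : ℤ) - 1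

/-! ### Coordinate subspaces, `U(K)`, `G_Σ` and the toric quotient -/

/-- The coordinate subspace `L_σ ⊆ ℂ^r`. -/
def LSub {r : ℕ} (σ : Finset (Fin r)) : Set (Fin r → ℂ) := {x | ∀ i ∈ σ, x i = 0}

/-- The complement `U(K)` of the coordinate subspace arrangement of type `K`. -/
def UK {r : ℕ} (K : Set (Finset (Fin r))) : Set (Fin r → ℂ) :=
  (⋃ σ ∈ {s : Finset (Fin r) | s ∉ K}, LSub σ)ᶜ

lemma mem_UK {r : ℕ} {K : Set (Finset (Fin r))} {x : Fin r → ℂ} :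
    x ∈ UK K ↔ ∀ σ : Finset (Fin r), σ ∉ K → ∃ i ∈ σ, x i ≠ 0 := by
  constructor
  · intro h σ hσ
    by_contra hc
    push_neg at hc
    exact h (Set.mem_biUnion hσ (fun i hi => hc i hi))
  · intro h hx
    rcases Set.mem_iUnion₂.1 hx with ⟨σ, hσ, hxσ⟩
    rcases h σ hσ with ⟨i, hi, hne⟩
    exact hne (hxσ i hi)

/-- The group `G_Σ` (as a subset of `ℂ^r`). -/
def GSet {n r : ℕ} (N : Fin r → Fin n → ℤ) : Set (Fin r → ℂ) :=
  {μ | (∀ k, μ k ≠ 0) ∧ ∀ m : Fin n → ℤ, ∏ k, μ k ^ (∑ j, N k j * m j) = 1}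

/-- The orbit relation of the `G_Σ`-action on `U(K_Σ)`. -/
def toricRel {n r : ℕ} (N : Fin r → Fin n → ℤ) (K : Set (Finset (Fin r)))
    (x y : ↥(UK K)) : Prop :=
  ∃ μ ∈ GSet N, (fun i => μ i * (x : Fin r → ℂ) i) = (y : Fin r → ℂ)

/-- The toric variety `X_Σ = U(K_Σ)/G_Σ`, as a topological quotient. -/
def XS {n r : ℕ} (N : Fin r → Fin n → ℤ) (K : Set (Finset (Fin r))) : Type :=
  Quot (toricRel N K)

instance {n r : ℕ} (N : Fin r → Fin n → ℤ) (K : Set (Finset (Fin r))) :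
    TopologicalSpace (XS N K) :=
  instTopologicalSpaceQuot

/-- The quotient map `q_Σ : U(K_Σ) → X_Σ`. -/
def qmap {n r : ℕ} (N : Fin r → Fin n → ℤ) (K : Set (Finset (Fin r))) :
    ↥(UK K) → XS N K :=
  Quot.mk (toricRel N K)

/-- `q_Σ` as a continuous map. -/
def qCont {n r : ℕ} (N : Fin r → Fin n → ℤ) (K : Set (Finset (Fin r))) :
    C(↥(UK K), XS N K) :=
  ⟨qmap N K, continuous_quot_mk⟩

lemma coneIdx_empty {n r : ℕ} (N : Fin r → Fin n → ℤ) :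
    coneIdx N (∅ : Finset (Fin r)) = ({0} : Set (Fin n → ℝ)) := by
  ext x
  constructor
  · rintro ⟨lam, -, hx⟩
    simpa using hx
  · intro hx
    exact ⟨0, fun i => le_refl 0, by simpa using hx⟩

lemma empty_mem_KC {n r : ℕ} (F : Fan n) (N : Fin r → Fin n → ℤ) :
    (∅ : Finset (Fin r)) ∈ KC F N := by
  show coneIdx N ∅ ∈ F.cones
  rw [coneIdx_empty]
  exact F.zero_mem

/-- The point `(1,…,1)`. -/
def onesC {r : ℕ} : Fin r → ℂ := fun _ => 1

lemma ones_mem_UK {r : ℕ} {K : Set (Finset (Fin r))} (h : (∅ : Finset (Fin r)) ∈ K) :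
    (onesC : Fin r → ℂ) ∈ UK K := by
  rw [mem_UK]
  intro σ hσ
  rcases Finset.nonempty_iff_ne_empty.2 (fun he : σ = ∅ => hσ (by rw [he]; exact h)) with ⟨i, hi⟩
  exact ⟨i, hi, one_ne_zero⟩

/-- The base point `(1,…,1)` of `U(K_Σ)`. -/
def onesUK {r : ℕ} {K : Set (Finset (Fin r))} (h : (∅ : Finset (Fin r)) ∈ K) : ↥(UK K) :=
  ⟨onesC, ones_mem_UK h⟩

/-- The base point `[1,…,1]` of `X_Σ`. -/
def baseX {n r : ℕ} (N : Fin r → Fin n → ℤ) (K : Set (Finset (Fin r)))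
    (h : (∅ : Finset (Fin r)) ∈ K) : XS N K :=
  qmap N K (onesUK h)



/-! ### Spaces of tuples of monic polynomials -/

/-- The monic polynomial `z^d + a_{d-1} z^{d-1} + ⋯ + a_0` with coefficient data `a`. -/
def toPoly {d : ℕ} (a : Fin d → ℂ) : Polynomial ℂ :=
  Polynomial.X ^ d + ∑ i : Fin d, Polynomial.C (a i) * Polynomial.X ^ (i : ℕ)

/-- The space `Pol*_D(S¹, X_Σ)` of `r`-tuples of monic polynomials of multidegree `D`
(in coefficient coordinates) such that for every `σ ∉ K` the polynomials `{f_i : i ∈ σ}`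
have no common real root. -/
def PolSp {r : ℕ} (K : Set (Finset (Fin r))) (D : Fin r → ℕ) :
    Set (∀ k : Fin r, Fin (D k) → ℂ) :=
  {f | ∀ σ : Finset (Fin r), σ ∉ K → ∀ t : ℝ,
        ∃ k ∈ σ, (toPoly (f k)).eval (t : ℂ) ≠ 0}

lemma polEval_mem_UK {r : ℕ} {K : Set (Finset (Fin r))} {D : Fin r → ℕ}
    (f : ↥(PolSp K D)) (t : ℝ) :
    (fun k => (toPoly (f.1 k)).eval (t : ℂ)) ∈ UK K :=
  mem_UK.2 fun σ hσ => f.2 σ hσ t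

/-! ### Loop spaces and induced maps on homotopy groups -/

/-- The loop space `Ω X = Map*(S¹, X)` with `S¹ = ℝ ∪ {∞}` (the one-point
compactification of `ℝ`), based at `x₀`. -/
def Loop (X : Type*) [TopologicalSpace X] (x₀ : X) : Type _ :=
  {γ : C(OnePoint ℝ, X) // γ OnePoint.infty = x₀}

instance {X : Type*} [TopologicalSpace X] (x₀ : X) : TopologicalSpace (Loop X x₀) :=
  instTopologicalSpaceSubtype

/-- The constant loop, base point of `Ω X`. -/
def Loop.const {X : Type*} [TopologicalSpace X] (x₀ : X) : Loop X x₀ :=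
  ⟨ContinuousMap.const _ x₀, rfl⟩

/-- A based continuous map induces a continuous map of loop spaces. -/
def loopMap {X Y : Type*} [TopologicalSpace X] [TopologicalSpace Y] {x₀ : X} {y₀ : Y}
    (f : C(X, Y)) (hf : f x₀ = y₀) : C(Loop X x₀, Loop Y y₀) where
  toFun γ := ⟨f.comp γ.1, by simp [γ.2, hf]⟩
  continuous_toFun := by
    apply Continuous.subtype_mk
    exact (ContinuousMap.continuous_postcomp f).comp continuous_subtype_val

/-- The map induced by a continuous map on homotopy groups (`π_q`). -/
def piMap (q : ℕ) {X Y : Type*} [TopologicalSpace X] [TopologicalSpace Y]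
    (f : C(X, Y)) (x : X) :
    HomotopyGroup (Fin q) X x → HomotopyGroup (Fin q) Y (f x) :=
  Quotient.map
    (fun p => ⟨f.comp p.1, fun y hy => by
      show f (p.1 y) = f x
      rw [p.2 y hy]⟩)
    (fun p₁ p₂ h => h.elim fun H => ⟨H.compContinuousMap f⟩)

/-- `f` is a homotopy equivalence through dimension `d`: it induces isomorphisms on
`π_k` for all `k ≤ d` (at every base point). -/
def HomotopyEquivThrough {X Y : Type*} [TopologicalSpace X] [TopologicalSpace Y]
    (f : C(X, Y)) (d : ℤ) : Prop :=
  ∀ (x : X) (k : ℕ), (k : ℤ) ≤ d → Function.Bijective (piMap k f x)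

/-- A genuine homotopy equivalence. -/
def IsHtpyEquiv {X Y : Type*} [TopologicalSpace X] [TopologicalSpace Y]
    (f : C(X, Y)) : Prop :=
  ∃ g : C(Y, X), (f.comp g).Homotopic (ContinuousMap.id Y) ∧
    (g.comp f).Homotopic (ContinuousMap.id X)

/-! ### `i_D`, lifts, and stabilization maps -/

/-- `j : Pol*_D → Ω U(K_Σ)` is a lift of `i_D` through `Ω q_Σ`, i.e. `Ω q_Σ ∘ j = i_D`:
for every tuple `f` and real `t`, the loop `j f` at time `t` lies over the point
`[f_1(t), …, f_r(t)]` of `X_Σ` (and at `∞` over `[1,…,1]`, automatically). -/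
def IsLiftOfID {n r : ℕ} (N : Fin r → Fin n → ℤ) (K : Set (Finset (Fin r)))
    (hE : (∅ : Finset (Fin r)) ∈ K) (D : Fin r → ℕ)
    (j : ↥(PolSp K D) → Loop ↥(UK K) (onesUK hE)) : Prop :=
  ∀ (f : ↥(PolSp K D)) (t : ℝ),
    qmap N K ((j f).1 (t : OnePoint ℝ)) =
      qmap N K ⟨fun k => (toPoly (f.1 k)).eval (t : ℂ), polEval_mem_UK f t⟩

/-- `i : Pol*_D → Ω X_Σ` is the map `i_D` given by evaluation. -/
def IsID {n r : ℕ} (N : Fin r → Fin n → ℤ) (K : Set (Finset (Fin r)))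
    (hE : (∅ : Finset (Fin r)) ∈ K) (D : Fin r → ℕ)
    (i : ↥(PolSp K D) → Loop (XS N K) (baseX N K hE)) : Prop :=
  ∀ (f : ↥(PolSp K D)) (t : ℝ),
    (i f).1 (t : OnePoint ℝ) =
      qmap N K ⟨fun k => (toPoly (f.1 k)).eval (t : ℂ), polEval_mem_UK f t⟩

/-- `φ` is an admissible parameter for the stabilization maps: a homeomorphism of `ℂ`
onto the half plane `{Re < bound}` carrying `ℝ` onto `(-∞, bound)`. -/
def AdmissiblePhi (bound : ℝ) (φ : ℂ → ℂ) : Prop :=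
  Continuous φ ∧ Function.Injective φ ∧ IsOpenMap φ ∧
    Set.range φ = {w : ℂ | w.re < bound} ∧
    φ '' {z : ℂ | z.im = 0} = {z : ℂ | z.im = 0 ∧ z.re < bound}

/-- The defining property of the stabilization map
`s_{D,D'}(f)_k = φ(f_k) · (z - x_k)^{d'_k - d_k}`, where `φ(f)` denotes the monic
polynomial whose roots are the images under `φ` of the roots of `f`. -/
def StabSpec {r : ℕ} (K : Set (Finset (Fin r))) (φ : ℂ → ℂ) (xpt : Fin r → ℂ)
    (D D' : Fin r → ℕ) (s : ↥(PolSp K D) → ↥(PolSp K D')) : Prop :=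
  ∀ (f : ↥(PolSp K D)) (k : Fin r),
    toPoly ((s f).1 k) =
      (((toPoly (f.1 k)).roots.map φ).map
        fun α => Polynomial.X - Polynomial.C α).prod
        * (Polynomial.X - Polynomial.C (xpt k)) ^ (D' k - D k)

/-- The general defining property of the map `j_D : Pol*_D → Ω U(K_Σ)`:
when `∑ d_k n_k = 0` it is a lift of `i_D` through `Ω q_Σ`, and otherwise it is the
composite `j_{D₀} ∘ s_{D,D₀}` for a suitable `D₀ = m₀ D*` as in condition (2.9.1). -/
def IsJD {n r : ℕ} (N : Fin r → Fin n → ℤ) (K : Set (Finset (Fin r)))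
    (hE : (∅ : Finset (Fin r)) ∈ K) (D : Fin r → ℕ)
    (j : C(↥(PolSp K D), Loop ↥(UK K) (onesUK hE))) : Prop :=
  ((∑ k, (D k : ℤ) • N k = 0) ∧ IsLiftOfID N K hE D j) ∨
  ((∑ k, (D k : ℤ) • N k ≠ 0) ∧
    ∃ (dstar : Fin r → ℕ) (m₀ : ℕ),
      (∀ k, 0 < dstar k) ∧ (∑ k, (dstar k : ℤ) • N k = 0) ∧
      (∀ k, D k < m₀ * dstar k) ∧
      ∃ (φ : ℂ → ℂ) (xpt : Fin r → ℂ),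
        AdmissiblePhi ((∑ k, D k : ℕ) : ℝ) φ ∧
        (∀ k, ((∑ k, D k : ℕ) : ℝ) < (xpt k).re) ∧ Function.Injective xpt ∧
        ∃ (j₀ : C(↥(PolSp K fun k => m₀ * dstar k), Loop ↥(UK K) (onesUK hE)))
          (s₀ : C(↥(PolSp K D), ↥(PolSp K fun k => m₀ * dstar k))),
          IsLiftOfID N K hE _ j₀ ∧ StabSpec K φ xpt D _ s₀ ∧ j = j₀.comp s₀)

/-! ### Stabilized (colimit) spaces -/

/-- The multidegree `D + t·e`. -/
def Dt {r : ℕ} (D : Fin r → ℕ) (t : ℕ) : Fin r → ℕ := fun k => D k + t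

/-- Carrier of the stabilized space: the disjoint union of the `Pol*_{D+te}`. -/
def ColCar {r : ℕ} (K : Set (Finset (Fin r))) (D : Fin r → ℕ) : Type :=
  Σ t : ℕ, ↥(PolSp K (Dt D t))

instance {r : ℕ} (K : Set (Finset (Fin r))) (D : Fin r → ℕ) :
    TopologicalSpace (ColCar K D) := by
  unfold ColCar; infer_instance

/-- The identifications generating the colimit along the stabilization maps. -/
def ColRel {r : ℕ} (K : Set (Finset (Fin r))) (D : Fin r → ℕ)
    (s : ∀ t : ℕ, ↥(PolSp K (Dt D t)) → ↥(PolSp K (Dt D (t + 1)))) :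
    ColCar K D → ColCar K D → Prop :=
  fun a b => b = ⟨a.1 + 1, s a.1 a.2⟩

/-- The stabilized space `Pol^Σ_{D+∞} = colim_t Pol*_{D+te}(S¹, X_Σ)`. -/
def PolColim {r : ℕ} (K : Set (Finset (Fin r))) (D : Fin r → ℕ)
    (s : ∀ t : ℕ, ↥(PolSp K (Dt D t)) → ↥(PolSp K (Dt D (t + 1)))) : Type :=
  Quot (ColRel K D s)

instance {r : ℕ} (K : Set (Finset (Fin r))) (D : Fin r → ℕ)
    (s : ∀ t : ℕ, ↥(PolSp K (Dt D t)) → ↥(PolSp K (Dt D (t + 1)))) :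
    TopologicalSpace (PolColim K D s) :=
  instTopologicalSpaceQuot

/-- Admissibility of a family of stabilization maps `s_{D+te}`. -/
def AdmissibleStabFamily {r : ℕ} (K : Set (Finset (Fin r))) (D : Fin r → ℕ)
    (s : ∀ t : ℕ, ↥(PolSp K (Dt D t)) → ↥(PolSp K (Dt D (t + 1)))) : Prop :=
  ∀ t : ℕ, ∃ (φ : ℂ → ℂ) (xpt : Fin r → ℂ),
    AdmissiblePhi ((∑ k, Dt D t k : ℕ) : ℝ) φ ∧
    (∀ k, ((∑ k, Dt D t k : ℕ) : ℝ) < (xpt k).re) ∧ Function.Injective xpt ∧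
    StabSpec K φ xpt (Dt D t) (Dt D (t + 1)) (s t)


section
/-! ### Part 1: tuples of polynomials, continuity of coefficients -/

open Polynomial in
/-- First coefficients of a polynomial. -/
def ofPoly (d : ℕ) (q : ℂ[X]) : Fin d → ℂ := fun n => q.coeff n

/-- The coefficient data of a tuple. -/
def toSp {r : ℕ} (D : Fin r → ℕ) (q : Fin r → Polynomial ℂ) : ∀ k : Fin r, Fin (D k) → ℂ :=
  fun k => ofPoly (D k) (q k)

/-- Monic tuple of multidegree `D`. -/
def MT {r : ℕ} (D : Fin r → ℕ) (q : Fin r → Polynomial ℂ) : Prop :=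
  ∀ k, (q k).Monic ∧ (q k).natDegree = D k

/-- The no common real root condition. -/
def Good {r : ℕ} (K : Set (Finset (Fin r))) (q : Fin r → Polynomial ℂ) : Prop :=
  ∀ σ : Finset (Fin r), σ ∉ K → ∀ t : ℝ, ∃ k ∈ σ, (q k).eval (t : ℂ) ≠ 0

/-- Coefficientwise continuity. -/
def CC {P : Type*} [TopologicalSpace P] (q : P → Polynomial ℂ) : Prop :=
  ∀ n, Continuous fun p => (q p).coeff n

open Polynomial

lemma toPoly_low {d : ℕ} (a : Fin d → ℂ) :
    (∑ i : Fin d, C (a i) * X ^ (i : ℕ) : ℂ[X]).degree < d := by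
  apply lt_of_le_of_lt (Polynomial.degree_sum_le _ _)
  rw [Finset.sup_lt_iff (by exact WithBot.bot_lt_coe d)]
  intro i _
  exact lt_of_le_of_lt (degree_C_mul_X_pow_le _ _) (by exact_mod_cast i.2)

lemma toPoly_monic {d : ℕ} (a : Fin d → ℂ) : (toPoly a).Monic :=
  monic_X_pow_add (toPoly_low a)

lemma toPoly_natDegree {d : ℕ} (a : Fin d → ℂ) : (toPoly a).natDegree = d := by
  unfold toPoly
  rw [natDegree_add_eq_left_of_degree_lt]
  · simp
  · rw [degree_X_pow]; exact toPoly_low a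

lemma toPoly_coeff {d : ℕ} (a : Fin d → ℂ) (n : Fin d) : (toPoly a).coeff n = a n := by
  unfold toPoly
  rw [coeff_add, coeff_X_pow, if_neg (by have := n.2; omega), finsetSum_coeff, zero_add]
  rw [Finset.sum_eq_single n]
  · simp
  · intro b _ hb
    rw [coeff_C_mul, coeff_X_pow, if_neg, mul_zero]
    intro h; exact hb (Fin.ext h.symm)
  · simp

lemma monic_ext_coeff {d : ℕ} {p q : ℂ[X]} (hp : p.Monic) (hpd : p.natDegree = d)
    (hq : q.Monic) (hqd : q.natDegree = d) (h : ∀ n < d, p.coeff n = q.coeff n) : p = q := by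
  ext n
  rcases lt_trichotomy n d with h1 | h1 | h1
  · exact h n h1
  · have a1 := hp.coeff_natDegree
    have a2 := hq.coeff_natDegree
    rw [hpd] at a1; rw [hqd] at a2; rw [h1, a1, a2]
  · rw [coeff_eq_zero_of_natDegree_lt (by omega), coeff_eq_zero_of_natDegree_lt (by omega)]

lemma toPoly_ofPoly {d : ℕ} {q : ℂ[X]} (hq : q.Monic) (hd : q.natDegree = d) :
    toPoly (ofPoly d q) = q :=
  monic_ext_coeff (toPoly_monic _) (toPoly_natDegree _) hq hd
    (fun n hn => by simpa [ofPoly] using toPoly_coeff (ofPoly d q) ⟨n, hn⟩)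

lemma toPoly_injective {d : ℕ} : Function.Injective (toPoly : (Fin d → ℂ) → ℂ[X]) := by
  intro a b h
  ext n
  rw [← toPoly_coeff a n, ← toPoly_coeff b n, h]

lemma toSp_mem {r : ℕ} {K : Set (Finset (Fin r))} {D : Fin r → ℕ} {q : Fin r → ℂ[X]}
    (h1 : MT D q) (h2 : Good K q) : toSp D q ∈ PolSp K D := by
  intro σ hσ t
  obtain ⟨k, hk, h⟩ := h2 σ hσ t
  refine ⟨k, hk, ?_⟩
  rwa [toSp, toPoly_ofPoly (h1 k).1 (h1 k).2]

lemma toPoly_toSp {r : ℕ} {D : Fin r → ℕ} {q : Fin r → ℂ[X]}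
    (h1 : MT D q) (k : Fin r) : toPoly (toSp D q k) = q k :=
  toPoly_ofPoly (h1 k).1 (h1 k).2

lemma good_toPoly_toSp {r : ℕ} {K : Set (Finset (Fin r))} {D : Fin r → ℕ} {q : Fin r → ℂ[X]}
    (h1 : MT D q) (h : toSp D q ∈ PolSp K D) : Good K q := by
  intro σ hσ t
  obtain ⟨k, hk, h⟩ := h σ hσ t
  refine ⟨k, hk, ?_⟩
  rwa [toPoly_toSp h1] at h

lemma MT_toPoly {r : ℕ} {D : Fin r → ℕ} (f : ∀ k : Fin r, Fin (D k) → ℂ) :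
    MT D (fun k => toPoly (f k)) := fun k => ⟨toPoly_monic _, toPoly_natDegree _⟩

section CCsec
variable {P : Type*} [TopologicalSpace P]

lemma continuous_toSp {r : ℕ} (D : Fin r → ℕ) {q : P → Fin r → ℂ[X]}
    (h : ∀ k, CC (fun p => q p k)) : Continuous (fun p => toSp D (q p)) := by
  refine continuous_pi fun k => continuous_pi fun n => h k n

lemma CC_const (q : ℂ[X]) : CC (fun _ : P => q) := fun _ => continuous_const

lemma CC_C {u : P → ℂ} (hu : Continuous u) : CC (fun p => C (u p)) := by
  intro n
  simp only [coeff_C]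
  split_ifs
  · exact hu
  · exact continuous_const

lemma CC.add {q q' : P → ℂ[X]} (h : CC q) (h' : CC q') : CC (fun p => q p + q' p) := by
  intro n; simp only [coeff_add]; exact (h n).add (h' n)

lemma CC.sub {q q' : P → ℂ[X]} (h : CC q) (h' : CC q') : CC (fun p => q p - q' p) := by
  intro n; simp only [coeff_sub]; exact (h n).sub (h' n)

lemma CC.mul {q q' : P → ℂ[X]} (h : CC q) (h' : CC q') : CC (fun p => q p * q' p) := by
  intro n; simp only [coeff_mul]
  exact continuous_finsetSum _ fun x _ => (h _).mul (h' _)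

lemma CC.sum {ι : Type*} {s : Finset ι} {q : ι → P → ℂ[X]} (h : ∀ i ∈ s, CC (q i)) :
    CC (fun p => ∑ i ∈ s, q i p) := by
  intro n; simp only [finsetSum_coeff]
  exact continuous_finsetSum _ fun x hx => h x hx n

lemma CC.prod {ι : Type*} {s : Finset ι} {q : ι → P → ℂ[X]} (h : ∀ i ∈ s, CC (q i)) :
    CC (fun p => ∏ i ∈ s, q i p) := by
  induction s using Finset.induction_on with
  | empty => simpa using CC_const 1
  | insert a s ha ih =>
    simp only [Finset.prod_insert ha]
    exact (h a (Finset.mem_insert_self _ _)).mul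
      (ih fun i hi => h i (Finset.mem_insert_of_mem hi))

lemma CC.pow {q : P → ℂ[X]} (h : CC q) (n : ℕ) : CC (fun p => q p ^ n) := by
  induction n with
  | zero => simpa using CC_const 1
  | succ n ih => simp only [pow_succ]; exact ih.mul h

lemma CC.comp_cont {Q : Type*} [TopologicalSpace Q] {q : P → ℂ[X]} (h : CC q) {g : Q → P}
    (hg : Continuous g) : CC (fun x => q (g x)) := fun n => (h n).comp hg

lemma CC_toPoly {d : ℕ} {a : P → Fin d → ℂ} (ha : Continuous a) :
    CC (fun p => toPoly (a p)) := by
  unfold toPoly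
  refine (CC_const _).add (CC.sum fun i _ => ?_)
  exact (CC_C ((continuous_apply i).comp ha)).mul (CC_const _)

lemma CC.eval {q : P → ℂ[X]} (h : CC q) {d : ℕ} (hd : ∀ p, (q p).natDegree ≤ d) {u : P → ℂ}
    (hu : Continuous u) : Continuous fun p => (q p).eval (u p) := by
  have : (fun p => (q p).eval (u p)) =
      fun p => ∑ n ∈ Finset.range (d + 1), (q p).coeff n * u p ^ n := by
    funext p
    exact eval_eq_sum_range' (by have := hd p; omega) _
  rw [this]
  exact continuous_finsetSum _ fun n _ => (h n).mul (hu.pow n)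

lemma CC.shift {q : P → ℂ[X]} (h : CC q) {d : ℕ} (hd : ∀ p, (q p).natDegree ≤ d) {u : P → ℂ}
    (hu : Continuous u) : CC fun p => (q p).comp (X + C (u p)) := by
  have : (fun p => (q p).comp (X + C (u p))) =
      fun p => ∑ n ∈ Finset.range (d + 1), C ((q p).coeff n) * (X + C (u p)) ^ n := by
    funext p
    rw [comp, eval₂_eq_sum_range' _ (n := d + 1) (by have := hd p; omega)]
  rw [this]
  exact CC.sum fun n _ => (CC_C (h n)).mul (((CC_const X).add (CC_C hu)).pow n)

lemma CC.divX {q : P → ℂ[X]} (h : CC q) {d : ℕ} (hd : ∀ p, (q p).natDegree = d) {u : P → ℂ}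
    (hu : Continuous u) : CC fun p => (q p) /ₘ (X - C (u p)) := by
  intro n
  simp only [coeff_divByMonic_X_sub_C, hd]
  exact continuous_finsetSum _ fun i _ => (hu.pow _).mul (h i)

end CCsec

/-- Bound on the roots. -/
lemma root_bound {d : ℕ} (a : Fin d → ℂ) {z : ℂ} (hz : (toPoly a).eval z = 0) :
    ‖z‖ ≤ ‖a‖ + 1 := by
  have h := IsRoot.norm_lt_cauchyBound (toPoly_monic a).ne_zero (a := z) hz
  have h2 : (cauchyBound (toPoly a)) ≤ ‖a‖₊ + 1 := by
    unfold cauchyBound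
    rw [(toPoly_monic a).leadingCoeff]
    simp only [nnnorm_one, div_one, add_le_add_iff_right]
    apply Finset.sup_le
    intro n hn
    rw [Finset.mem_range, toPoly_natDegree] at hn
    have := toPoly_coeff a ⟨n, hn⟩
    simp only at this
    rw [this]
    exact nnnorm_le_pi_nnnorm a _
  have h3 := (h.trans_le h2).le
  exact_mod_cast h3

lemma continuous_eval_toPoly {P : Type*} [TopologicalSpace P] {d : ℕ} {a : P → Fin d → ℂ}
    (ha : Continuous a) {u : P → ℂ} (hu : Continuous u) :
    Continuous fun p => (toPoly (a p)).eval (u p) :=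
  (CC_toPoly ha).eval (fun p => (toPoly_natDegree (a p)).le) hu

/-- `PolSp` is open. -/
lemma isOpen_PolSp {r : ℕ} (K : Set (Finset (Fin r))) (hE : (∅ : Finset (Fin r)) ∈ K)
    (D : Fin r → ℕ) : IsOpen (PolSp K D) := by
  have : PolSp K D = ⋂ σ : Finset (Fin r), {f | σ ∉ K → ∀ t : ℝ,
        ∃ k ∈ σ, (toPoly (f k)).eval (t : ℂ) ≠ 0} := by
    ext f; simp [PolSp]
  rw [this]
  refine isOpen_iInter_of_finite fun σ => ?_
  by_cases hσ : σ ∈ K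
  · simp [hσ]
  obtain ⟨k0, hk0⟩ : σ.Nonempty := by
    rw [Finset.nonempty_iff_ne_empty]; rintro rfl; exact hσ hE
  simp only [hσ, not_false_eq_true, forall_true_left]
  rw [isOpen_iff_eventually]
  intro f hf
  simp only [Set.mem_ofPred_eq] at hf
  have h1 : ∀ᶠ g in nhds f, ∀ t ∈ Set.Icc (-(‖f k0‖ + 2)) (‖f k0‖ + 2),
      ∃ k ∈ σ, (toPoly (g k)).eval ((t : ℝ) : ℂ) ≠ 0 := by
    refine isCompact_Icc.eventually_forall_of_forall_eventually fun t _ => ?_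
    obtain ⟨k, hk, hne⟩ := hf t
    have hc : Continuous fun x : (∀ k : Fin r, Fin (D k) → ℂ) × ℝ =>
        (toPoly (x.1 k)).eval (x.2 : ℂ) :=
      continuous_eval_toPoly ((continuous_apply k).comp continuous_fst)
        (Complex.continuous_ofReal.comp continuous_snd)
    filter_upwards [hc.continuousAt.eventually_ne (x := (f, t)) hne] with x hx
    exact ⟨k, hk, hx⟩
  have h2 : ∀ᶠ g in nhds f, ‖g k0‖ < ‖f k0‖ + 1 := by
    have : Continuous fun g : (∀ k : Fin r, Fin (D k) → ℂ) => ‖g k0‖ :=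
      (continuous_apply k0).norm
    exact this.continuousAt.eventually_lt continuousAt_const (by simp)
  filter_upwards [h1, h2] with g hg1 hg2 t
  by_cases ht : t ∈ Set.Icc (-(‖f k0‖ + 2)) (‖f k0‖ + 2)
  · exact hg1 t ht
  · refine ⟨k0, hk0, fun h0 => ht ?_⟩
    have := root_bound _ h0
    rw [Complex.norm_real, Real.norm_eq_abs] at this
    exact abs_le.1 (by linarith)

end

section
open Polynomial
/-! ### Part 2: moving the roots -/

/-- The monic polynomial whose roots are the images under `θ` of the roots of `q`. -/
def rt (θ : ℂ → ℂ) (q : ℂ[X]) : ℂ[X] := ((q.roots.map θ).map fun α => X - C α).prod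

/-- The Vieta map. -/
def vieta (d : ℕ) (α : Fin d → ℂ) : Fin d → ℂ := ofPoly d (∏ j, (X - C (α j)))

lemma vprod_monic {d : ℕ} (α : Fin d → ℂ) : (∏ j, (X - C (α j)) : ℂ[X]).Monic :=
  monic_prod_of_monic _ _ fun j _ => monic_X_sub_C _

lemma vprod_natDegree {d : ℕ} (α : Fin d → ℂ) : (∏ j, (X - C (α j)) : ℂ[X]).natDegree = d := by
  rw [natDegree_prod_of_monic _ _ fun j _ => monic_X_sub_C _]
  simp

lemma toPoly_vieta {d : ℕ} (α : Fin d → ℂ) : toPoly (vieta d α) = ∏ j, (X - C (α j)) :=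
  toPoly_ofPoly (vprod_monic α) (vprod_natDegree α)

lemma vprod_roots {d : ℕ} (α : Fin d → ℂ) :
    (∏ j, (X - C (α j)) : ℂ[X]).roots = Finset.univ.val.map α :=
  roots_multiset_prod_X_sub_C (Finset.univ.val.map α) ▸ by simp [Finset.prod, Function.comp_def]

lemma continuous_vieta (d : ℕ) : Continuous (vieta d) := by
  refine continuous_pi fun n => ?_
  have : CC (fun α : Fin d → ℂ => ∏ j, (X - C (α j))) :=
    CC.prod fun j _ => (CC_const X).sub (CC_C (continuous_apply j))
  exact this n

lemma rt_monic (θ : ℂ → ℂ) (q : ℂ[X]) : (rt θ q).Monic :=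
  monic_multiset_prod_of_monic _ _ fun α _ => monic_X_sub_C _

lemma rt_natDegree (θ : ℂ → ℂ) (q : ℂ[X]) : (rt θ q).natDegree = q.natDegree := by
  unfold rt
  rw [natDegree_multiset_prod_X_sub_C_eq_card, Multiset.card_map,
    IsAlgClosed.card_roots_eq_natDegree]

lemma rt_roots (θ : ℂ → ℂ) (q : ℂ[X]) : (rt θ q).roots = q.roots.map θ :=
  roots_multiset_prod_X_sub_C _

lemma rt_rt (θ η : ℂ → ℂ) (q : ℂ[X]) : rt η (rt θ q) = rt (η ∘ θ) q := by
  unfold rt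
  rw [roots_multiset_prod_X_sub_C, Multiset.map_map η θ]

lemma rt_congr_id {θ : ℂ → ℂ} {q : ℂ[X]} (hq : q.Monic) (h : ∀ z, q.eval z = 0 → θ z = z) :
    rt θ q = q := by
  unfold rt
  have : q.roots.map θ = q.roots := by
    conv_rhs => rw [← Multiset.map_id q.roots]
    refine Multiset.map_congr rfl fun z hz => ?_
    exact h z ((mem_roots hq.ne_zero).1 hz)
  rw [this]
  exact ((IsAlgClosed.splits q).eq_prod_roots_of_monic hq).symm

lemma rt_eval_eq_zero {θ : ℂ → ℂ} {q : ℂ[X]} (hq : q.Monic) {w : ℂ} :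
    (rt θ q).eval w = 0 ↔ ∃ z, q.eval z = 0 ∧ θ z = w := by
  have h1 : (rt θ q).eval w = 0 ↔ w ∈ (rt θ q).roots := by
    rw [mem_roots (rt_monic θ q).ne_zero, IsRoot]
  rw [h1, rt_roots, Multiset.mem_map]
  simp only [mem_roots hq.ne_zero, IsRoot]

lemma vieta_surj (d : ℕ) : Function.Surjective (vieta d) := by
  intro a
  obtain ⟨l, hl⟩ := Quot.exists_rep (toPoly a).roots
  have hl' : (l : Multiset ℂ) = (toPoly a).roots := hl
  have hlen : l.length = d := by
    rw [← Multiset.coe_card, hl', IsAlgClosed.card_roots_eq_natDegree, toPoly_natDegree]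
  subst hlen
  refine ⟨fun j => l.get j, ?_⟩
  apply toPoly_injective
  rw [toPoly_vieta, (IsAlgClosed.splits (toPoly a)).eq_prod_roots_of_monic (toPoly_monic a), ← hl']
  rw [Multiset.map_coe, Multiset.prod_coe, ← List.prod_ofFn]
  congr 1
  apply List.ext_get <;> simp

lemma vieta_closed (d : ℕ) : IsClosedMap (vieta d) := by
  have : IsProperMap (vieta d) := by
    rw [isProperMap_iff_tendsto_cocompact]
    refine ⟨continuous_vieta d, ?_⟩
    rw [← Metric.cobounded_eq_cocompact,
      ← tendsto_norm_atTop_iff_cobounded]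
    have h := tendsto_norm_cobounded_atTop (E := Fin d → ℂ)
    refine Filter.tendsto_atTop_mono (f := fun α : Fin d → ℂ => ‖α‖ - 1) (fun α => ?_)
      (Filter.tendsto_atTop_add_const_right _ (-1) h)
    have : ‖α‖ ≤ ‖vieta d α‖ + 1 := by
      rw [pi_norm_le_iff_of_nonneg (by positivity)]
      intro j
      apply root_bound
      rw [toPoly_vieta, eval_prod]
      exact Finset.prod_eq_zero (Finset.mem_univ j) (by simp)
    linarith
  exact this.isClosedMap

lemma rt_toPoly_vieta {d : ℕ} (θ : ℂ → ℂ) (α : Fin d → ℂ) :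
    rt θ (toPoly (vieta d α)) = ∏ j, (X - C (θ (α j))) := by
  unfold rt
  rw [toPoly_vieta, vprod_roots, Multiset.map_map, Multiset.map_map]
  simp [Finset.prod]

lemma CC.rt {P : Type*} [TopologicalSpace P] {q : P → ℂ[X]} (hq : CC q) {d : ℕ}
    (hm : ∀ p, (q p).Monic) (hd : ∀ p, (q p).natDegree = d) {U : Set ℂ}
    (hU : ∀ p z, (q p).eval z = 0 → z ∈ U) {θ : ℂ → ℂ} (hθ : ContinuousOn θ U) :
    CC fun p => rt θ (q p) := by
  intro n
  set W : Set (Fin d → ℂ) := {a | ∀ z, (toPoly a).eval z = 0 → z ∈ U} with hW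
  let V' := W.restrictPreimage (vieta d)
  have hquot : Topology.IsQuotientMap V' :=
    ((vieta_closed d).restrictPreimage W).isQuotientMap
      ((continuous_vieta d).restrictPreimage) ((vieta_surj d).restrictPreimage W)
  have hc : Continuous fun a : W => (Toric.rt θ (toPoly a.1)).coeff n := by
    rw [hquot.continuous_iff]
    have : ((fun a : W => (Toric.rt θ (toPoly a.1)).coeff n) ∘ V') =
        fun α => (∏ j, (X - C (θ (α.1 j)))).coeff n := by
      funext α
      change (Toric.rt θ (toPoly (vieta d α.1))).coeff n = _
      rw [rt_toPoly_vieta]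
    rw [this]
    have h2 : CC fun α : (vieta d ⁻¹' W) => ∏ j, (X - C (θ (α.1 j))) := by
      refine CC.prod fun j _ => (CC_const X).sub (CC_C ?_)
      refine hθ.comp_continuous ((continuous_apply j).comp continuous_subtype_val) fun α => ?_
      have := α.2
      refine this _ ?_
      rw [toPoly_vieta, eval_prod]
      exact Finset.prod_eq_zero (Finset.mem_univ j) (by simp)
    exact h2 n
  have hmem : ∀ p, ofPoly d (q p) ∈ W := by
    intro p z hz
    rw [toPoly_ofPoly (hm p) (hd p)] at hz
    exact hU p z hz
  have hc2 : Continuous fun p => (⟨ofPoly d (q p), hmem p⟩ : W) :=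
    Continuous.subtype_mk (f := fun p => ofPoly d (q p)) (continuous_pi fun n => hq n) _
  have := hc.comp hc2
  refine this.congr fun p => ?_
  simp only [Function.comp]
  rw [toPoly_ofPoly (hm p) (hd p)]

end

section
open Polynomial
/-! ### Part 3: genericity -/

/-- Coefficientwise smoothness. -/
def SC {E : Type*} [NormedAddCommGroup E] [NormedSpace ℝ E] (q : E → ℝ[X]) : Prop :=
  ∀ n, ContDiff ℝ 1 fun p => (q p).coeff n

section SCsec
variable {E : Type*} [NormedAddCommGroup E] [NormedSpace ℝ E]

lemma SC_const (q : ℝ[X]) : SC (fun _ : E => q) := fun _ => contDiff_const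

lemma SC_C {u : E → ℝ} (hu : ContDiff ℝ 1 u) : SC (fun p => C (u p)) := by
  intro n
  simp only [coeff_C]
  split_ifs
  · exact hu
  · exact contDiff_const

lemma SC.add {q q' : E → ℝ[X]} (h : SC q) (h' : SC q') : SC (fun p => q p + q' p) := by
  intro n; simp only [coeff_add]; exact (h n).add (h' n)

lemma SC.sub {q q' : E → ℝ[X]} (h : SC q) (h' : SC q') : SC (fun p => q p - q' p) := by
  intro n; simp only [coeff_sub]; exact (h n).sub (h' n)

lemma SC.mul {q q' : E → ℝ[X]} (h : SC q) (h' : SC q') : SC (fun p => q p * q' p) := by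
  intro n; simp only [coeff_mul]
  exact ContDiff.sum fun x _ => (h _).mul (h' _)

lemma SC.sum {ι : Type*} {s : Finset ι} {q : ι → E → ℝ[X]} (h : ∀ i ∈ s, SC (q i)) :
    SC (fun p => ∑ i ∈ s, q i p) := by
  intro n; simp only [finsetSum_coeff]
  exact ContDiff.sum fun x hx => h x hx n

lemma SC.prod {ι : Type*} {s : Finset ι} {q : ι → E → ℝ[X]} (h : ∀ i ∈ s, SC (q i)) :
    SC (fun p => ∏ i ∈ s, q i p) := by
  induction s using Finset.induction_on with
  | empty => simpa using SC_const 1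
  | insert a s ha ih =>
    simp only [Finset.prod_insert ha]
    exact (h a (Finset.mem_insert_self _ _)).mul
      (ih fun i hi => h i (Finset.mem_insert_of_mem hi))

end SCsec

/-- Real polynomial with prescribed leading coefficient. -/
def rpoly {d : ℕ} (b : ℝ) (a : Fin d → ℝ) : ℝ[X] := C b * X ^ d + ∑ n : Fin d, C (a n) * X ^ (n : ℕ)

lemma rpoly_coeff {d : ℕ} (b : ℝ) (a : Fin d → ℝ) (n : ℕ) :
    (rpoly b a).coeff n = if h : n < d then a ⟨n, h⟩ else if n = d then b else 0 := by
  unfold rpoly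
  rw [coeff_add, finsetSum_coeff, coeff_C_mul, coeff_X_pow]
  simp only [coeff_C_mul, coeff_X_pow]
  split_ifs with h1 h2 h3
  · omega
  · subst h1
    rw [Finset.sum_eq_zero]
    · simp
    · intro k _
      rw [if_neg (by have := k.2; omega), mul_zero]
  · rw [Finset.sum_eq_single ⟨n, h3⟩]
    · simp
    · intro k _ hk
      rw [if_neg, mul_zero]
      intro h; exact hk (Fin.ext h.symm)
    · simp
  · rw [Finset.sum_eq_zero]
    · simp
    · intro k _
      rw [if_neg (by have := k.2; omega), mul_zero]

lemma rpoly_natDegree_le {d : ℕ} (b : ℝ) (a : Fin d → ℝ) : (rpoly b a).natDegree ≤ d := by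
  rw [natDegree_le_iff_coeff_eq_zero]
  intro n hn
  rw [rpoly_coeff, dif_neg (by omega), if_neg (by omega)]

lemma rpoly_eq {d : ℕ} {b : ℝ} {q : ℝ[X]} (h : q.natDegree ≤ d) (hb : q.coeff d = b) :
    rpoly b (fun n : Fin d => q.coeff n) = q := by
  ext n
  rw [rpoly_coeff]
  split_ifs with h1 h2
  · rfl
  · rw [h2, hb]
  · rw [coeff_eq_zero_of_natDegree_lt (by omega)]

lemma SC_rpoly {E : Type*} [NormedAddCommGroup E] [NormedSpace ℝ E] {d : ℕ} (b : ℝ)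
    {a : E → Fin d → ℝ} (ha : ContDiff ℝ 1 a) : SC fun p => rpoly b (a p) := by
  unfold rpoly
  refine (SC_const _).add (SC.sum fun n _ => ?_)
  exact (SC_C (contDiff_pi.1 ha n)).mul (SC_const _)

/-- Division of a real polynomial by a product of linear factors. -/
lemma rpoly_factor {d m : ℕ} {b : ℝ} {a : Fin d → ℝ} {L : Type*} (A : Finset L) (t : L → ℝ)
    (ht : Set.InjOn t A) (hA : A.card ≤ d) (hm : m = d - A.card)
    (h0 : ∀ l ∈ A, (rpoly b a).eval (t l) = 0) :
    ∃ q : Fin m → ℝ, rpoly b a = (∏ l ∈ A, (X - C (t l))) * rpoly b q := by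
  have hdvd : (∏ l ∈ A, (X - C (t l))) ∣ rpoly b a := by
    refine Finset.prod_dvd_of_coprime ?_ ?_
    · intro l hl l' hl' hne
      exact isCoprime_X_sub_C_of_isUnit_sub
        (sub_ne_zero.2 fun h => hne (ht hl hl' h)).isUnit
    · intro l hl
      exact dvd_iff_isRoot.2 (h0 l hl)
  have hmon : (∏ l ∈ A, (X - C (t l))).Monic := monic_prod_of_monic _ _ fun l _ => monic_X_sub_C _
  have hdeg : (∏ l ∈ A, (X - C (t l))).natDegree = A.card := by
    rw [natDegree_prod_of_monic _ _ fun l _ => monic_X_sub_C _]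
    simp
  obtain ⟨q, hq⟩ := hdvd
  have hqd : q.natDegree ≤ m := by
    by_cases h : q = 0
    · simp [h]
    have h1 := hmon.natDegree_mul' h
    rw [← hq, hdeg] at h1
    have := rpoly_natDegree_le b a
    omega
  have hqc : q.coeff m = b := by
    have h1 := coeff_mul_add_eq_of_natDegree_le hdeg.le hqd
    rw [← hq] at h1
    have h2 := hmon.coeff_natDegree
    rw [hdeg] at h2
    rw [h2, one_mul, rpoly_coeff, dif_neg (by omega), if_pos (by omega)] at h1
    exact h1.symm
  exact ⟨fun n => q.coeff n, by rw [rpoly_eq hqd hqc, hq]⟩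

theorem generic_dense {ι J : Type} [Fintype ι] [Fintype J] (d : J → ℕ) (b : J → ℝ)
    (h : (ι → ℝ) → ∀ j, Fin (d j) → ℝ) (hh : ContDiff ℝ 1 h) (m s : ℕ) [Nonempty J] (hm : ∀ j, m ≤ d j)
    (hdim : Fintype.card ι + m < m * s) :
    Dense {ω : ∀ j, Fin (d j) → ℝ | ∀ p, ¬ ∃ (t : Fin m → ℝ) (S : Fin m → Finset J),
      Function.Injective t ∧ (∀ l, (S l).card = s) ∧
      ∀ l, ∀ j ∈ S l, (rpoly (b j) (h p j + ω j)).eval (t l) = 0} := by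
  let A : (Fin m → Finset J) → J → Finset (Fin m) := fun S j => Finset.univ.filter fun l => j ∈ S l
  have hA : ∀ S j, (A S j).card ≤ d j := fun S j =>
    ((Finset.card_le_univ _).trans (by simp)).trans (hm j)
  let Φ : ∀ S : Fin m → Finset J,
    ((ι → ℝ) × (Fin m → ℝ) × (∀ j, Fin (d j - (A S j).card) → ℝ)) → ∀ j, Fin (d j) → ℝ :=
    fun S x j n => ((∏ l ∈ A S j, (X - C (x.2.1 l))) * rpoly (b j) (x.2.2 j)).coeff n - h x.1 j n
  have hΦ : ∀ S, ContDiff ℝ 1 (Φ S) := by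
    intro S
    rw [contDiff_pi]; intro j
    rw [contDiff_pi]; intro n
    refine ContDiff.sub ?_ ?_
    · have : SC fun x : ((ι → ℝ) × (Fin m → ℝ) × (∀ j, Fin (d j - (A S j).card) → ℝ)) =>
          ((∏ l ∈ A S j, (X - C (x.2.1 l))) * rpoly (b j) (x.2.2 j)) := by
        refine SC.mul (SC.prod fun l _ => (SC_const X).sub (SC_C ?_)) (SC_rpoly _ ?_)
        · fun_prop
        · have h1 : ContDiff ℝ 1 fun x : ((ι → ℝ) × (Fin m → ℝ) ×
              (∀ j, Fin (d j - (A S j).card) → ℝ)) => x.2.2 := contDiff_snd.comp contDiff_snd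
          exact contDiff_pi.1 h1 j
      exact this n
    · have h1 := contDiff_pi.1 (contDiff_pi.1 hh j) n
      exact h1.comp contDiff_fst
  have hlt : dimH (⋃ S : {S : Fin m → Finset J // ∀ l, (S l).card = s}, Set.range (Φ S.1)) <
      Module.finrank ℝ (∀ j, Fin (d j) → ℝ) := by
    have hfr : Module.finrank ℝ (∀ j, Fin (d j) → ℝ) = ∑ j, d j := by
      rw [Module.finrank_pi_fintype]; simp
    rw [dimH_iUnion]
    refine lt_of_le_of_lt (b := ((∑ j, d j - 1 : ℕ) : ENNReal)) (iSup_le fun S => ?_) ?_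
    · refine (ContDiff.dimH_range_le (hΦ S.1)).trans ?_
      have h0 : Module.finrank ℝ (∀ j, Fin (d j - (A S.1 j).card) → ℝ) =
          ∑ j, (d j - (A S.1 j).card) := by
        rw [Module.finrank_pi_fintype]; simp
      rw [Module.finrank_prod, Module.finrank_prod, h0]
      simp only [Module.finrank_fintype_fun_eq_card, Fintype.card_fin]
      have h1 : ∑ j, (d j - (A S.1 j).card) + ∑ j, (A S.1 j).card = ∑ j, d j := by
        rw [← Finset.sum_add_distrib]
        exact Finset.sum_congr rfl fun j _ => Nat.sub_add_cancel (hA S.1 j)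
      have h2 : ∑ j, (A S.1 j).card = m * s := by
        have h3 : ∀ l, ∑ j : J, (if j ∈ S.1 l then 1 else 0) = s := by
          intro l; refine Eq.trans ?_ (S.2 l); simp
        simp only [A, Finset.card_filter]
        rw [Finset.sum_comm]
        simp [h3]
      have h4 : Fintype.card ι + (m + ∑ j, (d j - (A S.1 j).card)) ≤ ∑ j, d j - 1 := by omega
      exact_mod_cast h4
    · rw [hfr]
      have h1 : 0 < m := by rcases Nat.eq_zero_or_pos m with h | h
                            · simp [h] at hdim
                            · exact h
      have h2 : 0 < s := by rcases Nat.eq_zero_or_pos s with h | h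
                            · simp [h] at hdim
                            · exact h
      · obtain ⟨j⟩ := ‹Nonempty J›
        have h3 : d j ≤ ∑ j, d j := Finset.single_le_sum (fun _ _ => Nat.zero_le _) (Finset.mem_univ j)
        have := hm j
        have h4 : ∑ j, d j - 1 < ∑ j, d j := by omega
        exact_mod_cast h4
  refine (dense_compl_of_dimH_lt_finrank hlt).mono ?_
  intro ω hω p ⟨t, S, ht, hS, h0⟩
  apply hω
  have key : ∀ j, ∃ q : Fin (d j - (A S j).card) → ℝ, rpoly (b j) (h p j + ω j) =
      (∏ l ∈ A S j, (X - C (t l))) * rpoly (b j) q := by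
    intro j
    refine rpoly_factor (A S j) t ht.injOn (hA S j) rfl fun l hl => h0 l j ?_
    exact (Finset.mem_filter.1 hl).2
  choose q hq using key
  refine Set.mem_iUnion.2 ⟨⟨S, hS⟩, ⟨p, t, q⟩, ?_⟩
  funext j n
  simp only [Φ]
  rw [← hq, rpoly_coeff, dif_pos n.2]
  simp

end

section
open Polynomial

lemma toPoly_eval_split {d : ℕ} (a : Fin d → ℂ) (t : ℝ) :
    (toPoly a).eval (t : ℂ) = (((rpoly 1 fun n => (a n).re).eval t : ℝ) : ℂ) +
      (((rpoly 0 fun n => (a n).im).eval t : ℝ) : ℂ) * Complex.I := by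
  unfold toPoly rpoly
  simp only [eval_add, eval_pow, eval_X, eval_finsetSum, eval_mul, eval_C]
  push_cast
  simp only [one_mul, zero_mul, zero_add]
  rw [Finset.sum_mul, add_assoc, ← Finset.sum_add_distrib]
  congr 1
  refine Finset.sum_congr rfl fun n _ => ?_
  conv_lhs => rw [← Complex.re_add_im (a n)]
  ring

lemma toPoly_eval_re {d : ℕ} (a : Fin d → ℂ) (t : ℝ) :
    ((toPoly a).eval (t : ℂ)).re = (rpoly 1 fun n => (a n).re).eval t := by
  rw [toPoly_eval_split]; simp

lemma toPoly_eval_im {d : ℕ} (a : Fin d → ℂ) (t : ℝ) :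
    ((toPoly a).eval (t : ℂ)).im = (rpoly 0 fun n => (a n).im).eval t := by
  rw [toPoly_eval_split]; simp

/-- Genericity condition. -/
def Generic {r : ℕ} (i : Fin r) (m ρ : ℕ) (q : Fin r → ℂ[X]) : Prop :=
  ¬ ∃ (t : Fin m → ℝ) (S : Fin m → Finset (Fin r)), Function.Injective t ∧
    (∀ l, (S l).card = ρ ∧ i ∉ S l) ∧
    ∀ l, (∀ j ∈ S l, (q j).eval ((t l : ℝ) : ℂ) = 0) ∧ ((q i).eval ((t l : ℝ) : ℂ)).re = 0

theorem exists_generic_approx {ι : Type} [Fintype ι] {r : ℕ} (D : Fin r → ℕ) (i : Fin r)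
    (m ρ : ℕ) (hm : ∀ k, m ≤ D k) (hdim : Fintype.card ι < 2 * m * ρ)
    (f : (ι → unitInterval) → ∀ k, Fin (D k) → ℂ) (hf : Continuous f) {ε : ℝ} (hε : 0 < ε) :
    ∃ g : (ι → unitInterval) → ∀ k, Fin (D k) → ℂ, Continuous g ∧
      (∀ p, dist (g p) (f p) < ε) ∧ ∀ p, Generic i m ρ (fun k => toPoly (g p k)) := by
  let pr : (ι → ℝ) → (ι → unitInterval) := fun x j => Set.projIcc 0 1 zero_le_one (x j)
  have hpr : UniformContinuous pr := by
    rw [uniformContinuous_pi]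
    intro j
    exact (LipschitzWith.projIcc zero_le_one).uniformContinuous.comp
      (Pi.uniformContinuous_proj _ j)
  have huf : UniformContinuous (f ∘ pr) :=
    (CompactSpace.uniformContinuous_of_continuous hf).comp hpr
  obtain ⟨G, hG, hGd⟩ := huf.exists_contDiff_dist_le (half_pos hε)
  have hG1 : ContDiff ℝ 1 G := hG.of_le (by exact_mod_cast le_top)
  let h : (ι → ℝ) → ∀ j : Fin r × Bool, Fin (D j.1) → ℝ := fun p j n =>
    if j.2 then (G p j.1 n).re else (G p j.1 n).im
  have hh : ContDiff ℝ 1 h := by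
    rw [contDiff_pi]; intro j
    rw [contDiff_pi]; intro n
    have h1 := contDiff_pi.1 (contDiff_pi.1 hG1 j.1) n
    simp only [h]
    split_ifs
    · exact Complex.reCLM.contDiff.comp h1
    · exact Complex.imCLM.contDiff.comp h1
  haveI : Nonempty (Fin r × Bool) := ⟨(i, true)⟩
  have hdense := generic_dense (fun j : Fin r × Bool => D j.1) (fun j => if j.2 then 1 else 0) h hh
    m (2 * ρ + 1) (fun j => hm j.1) (by
      have : m * (2 * ρ + 1) = 2 * m * ρ + m := by ring
      omega)
  obtain ⟨ω, hω, hωd⟩ := hdense.exists_dist_lt 0 (show (0 : ℝ) < ε / 4 by positivity)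
  rw [dist_zero_left] at hωd
  let w : ∀ k, Fin (D k) → ℂ := fun k n => ⟨ω (k, true) n, ω (k, false) n⟩
  have hw : ‖w‖ ≤ ε / 2 := by
    rw [pi_norm_le_iff_of_nonneg (by positivity)]; intro k
    rw [pi_norm_le_iff_of_nonneg (by positivity)]; intro n
    have h1 : ∀ b, |ω (k, b) n| ≤ ε / 4 := fun b =>
      ((norm_le_pi_norm (ω (k, b)) n).trans (norm_le_pi_norm ω (k, b))).trans hωd.le
    refine (Complex.norm_le_abs_re_add_abs_im _).trans ?_
    have := h1 true; have := h1 false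
    simp only [w]
    linarith
  let v : (ι → unitInterval) → (ι → ℝ) := fun p j => (p j : ℝ)
  have hv : Continuous v := by fun_prop
  have hprv : ∀ p, pr (v p) = p := by
    intro p; funext j; exact Set.projIcc_val _ _
  refine ⟨fun p => G (v p) + w, (hG1.continuous.comp hv).add continuous_const, fun p => ?_,
    fun p => ?_⟩
  · have h1 := hGd (v p)
    simp only [Function.comp, hprv] at h1
    calc dist (G (v p) + w) (f p) ≤ dist (G (v p) + w) (G (v p)) + dist (G (v p)) (f p) :=
          dist_triangle _ _ _
      _ < ε := by
          have : dist (G (v p) + w) (G (v p)) = ‖w‖ := by simp [dist_eq_norm]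
          linarith
  · rintro ⟨t, S, ht, hS, h0⟩
    refine hω (v p) ⟨t, fun l => insert (i, true) (S l ×ˢ Finset.univ), ht, fun l => ?_, ?_⟩
    · rw [Finset.card_insert_of_notMem, Finset.card_product, (hS l).1]
      · simp; ring
      · simp [(hS l).2]
    · have hre : ∀ k, (fun n => ((G (v p) + w) k n).re) = h (v p) (k, true) + ω (k, true) := by
        intro k; funext n; simp [h, w]
      have him : ∀ k, (fun n => ((G (v p) + w) k n).im) = h (v p) (k, false) + ω (k, false) := by
        intro k; funext n; simp [h, w]
      rintro l ⟨j, b⟩ hj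
      rw [Finset.mem_insert] at hj
      rcases hj with hj | hj
      · obtain ⟨rfl, rfl⟩ := Prod.mk.inj hj
        have := (h0 l).2
        rw [toPoly_eval_re, hre] at this
        simpa using this
      · have h1 := (h0 l).1 j (Finset.mem_product.1 hj).1
        cases b
        · have := congrArg Complex.im h1
          rw [toPoly_eval_im, him] at this
          simpa using this
        · have := congrArg Complex.re h1
          rw [toPoly_eval_re, hre] at this
          simpa using this

end

section
open Polynomial
/-! ### Part 4: convexity and selection -/

/-- Purely imaginary perturbation of the coefficients of the `i`-th component. -/
def pert {r : ℕ} {D : Fin r → ℕ} (i : Fin r) (a : ∀ k, Fin (D k) → ℂ) (τ : ℝ)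
    (v : Fin (D i) → ℝ) : ∀ k, Fin (D k) → ℂ :=
  a + Pi.single (M := fun k => Fin (D k) → ℂ) i fun n => Complex.I * ((τ * v n : ℝ) : ℂ)

lemma toPoly_add {d : ℕ} (a b : Fin d → ℂ) :
    toPoly (a + b) = toPoly a + ∑ n : Fin d, C (b n) * X ^ (n : ℕ) := by
  unfold toPoly
  rw [add_assoc, ← Finset.sum_add_distrib]
  simp [add_mul]

lemma aeval_rpoly {d : ℕ} (v : Fin d → ℝ) (z : ℂ) :
    aeval z (rpoly 0 v) = ∑ n : Fin d, (v n : ℂ) * z ^ (n : ℕ) := by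
  unfold rpoly
  simp

lemma aeval_rpoly_real {d : ℕ} (v : Fin d → ℝ) (t : ℝ) :
    aeval (t : ℂ) (rpoly 0 v) = (((rpoly 0 v).eval t : ℝ) : ℂ) := by
  rw [aeval_rpoly]; simp [rpoly, eval_finsetSum]

lemma pert_eval_ne {r : ℕ} {D : Fin r → ℕ} {i : Fin r} (a : ∀ k, Fin (D k) → ℂ) (τ : ℝ)
    (v : Fin (D i) → ℝ) {k : Fin r} (hk : k ≠ i) : pert i a τ v k = a k := by
  simp [pert, Pi.single_eq_of_ne hk]

lemma pert_eval {r : ℕ} {D : Fin r → ℕ} (i : Fin r) (a : ∀ k, Fin (D k) → ℂ) (τ : ℝ)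
    (v : Fin (D i) → ℝ) (z : ℂ) : (toPoly (pert i a τ v i)).eval z =
      (toPoly (a i)).eval z + Complex.I * (τ * aeval z (rpoly 0 v)) := by
  have : pert i a τ v i = a i + fun n => Complex.I * ((τ * v n : ℝ) : ℂ) := by
    simp [pert]
  rw [this, toPoly_add, aeval_rpoly]
  simp only [eval_add, eval_finsetSum, eval_mul, eval_C, eval_pow, eval_X, Finset.mul_sum]
  congr 1
  refine Finset.sum_congr rfl fun n _ => ?_
  push_cast; ring

lemma pert_zero {r : ℕ} {D : Fin r → ℕ} (i : Fin r) (a : ∀ k, Fin (D k) → ℂ)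
    (v : Fin (D i) → ℝ) : pert i a 0 v = a := by
  unfold pert
  simp
  rfl

/-- The set of admissible imaginary perturbations. -/
def CSet {r : ℕ} (K : Set (Finset (Fin r))) {D : Fin r → ℕ} (i : Fin r)
    (a : ∀ k, Fin (D k) → ℂ) : Set (Fin (D i) → ℝ) :=
  {v | ∀ τ ∈ Set.Icc (-1 : ℝ) 1, pert i a τ v ∈ PolSp K D}

/-- Badness of a perturbation. -/
lemma pert_bad {r : ℕ} {K : Set (Finset (Fin r))} {D : Fin r → ℕ} {i : Fin r}
    {a : ∀ k, Fin (D k) → ℂ} (ha : a ∈ PolSp K D) {τ : ℝ} {v : Fin (D i) → ℝ}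
    (h : pert i a τ v ∉ PolSp K D) : ∃ σ, σ ∉ K ∧ i ∈ σ ∧ ∃ t : ℝ,
      (∀ k ∈ σ, k ≠ i → (toPoly (a k)).eval (t : ℂ) = 0) ∧
      ((toPoly (a i)).eval (t : ℂ)).re = 0 ∧
      ((toPoly (a i)).eval (t : ℂ)).im + τ * (rpoly 0 v).eval t = 0 := by
  unfold PolSp at h
  simp only [Set.mem_ofPred_eq, not_forall, not_exists, not_and, not_not] at h
  obtain ⟨σ, hσ, t, h0⟩ := h
  by_cases hi : i ∈ σ
  · refine ⟨σ, hσ, hi, t, fun k hk hki => ?_, ?_⟩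
    · rw [← pert_eval_ne a τ v hki]; exact h0 k hk
    · have h1 := h0 i hi
      rw [pert_eval, aeval_rpoly_real] at h1
      have h2 := congrArg Complex.re h1
      have h3 := congrArg Complex.im h1
      simp at h2 h3
      exact ⟨h2, h3⟩
  · exfalso
    obtain ⟨k, hk, hne⟩ := ha σ hσ t
    apply hne
    have hki : k ≠ i := fun h => hi (h ▸ hk)
    rw [← pert_eval_ne a τ v hki]; exact h0 k hk

lemma pert_bad' {r : ℕ} {K : Set (Finset (Fin r))} {D : Fin r → ℕ} {i : Fin r}
    {a : ∀ k, Fin (D k) → ℂ} {τ : ℝ} {v : Fin (D i) → ℝ}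
    {σ : Finset (Fin r)} (hσ : σ ∉ K) {t : ℝ}
    (h0 : ∀ k ∈ σ, k ≠ i → (toPoly (a k)).eval (t : ℂ) = 0)
    (h1 : ((toPoly (a i)).eval (t : ℂ)).re = 0)
    (h2 : ((toPoly (a i)).eval (t : ℂ)).im + τ * (rpoly 0 v).eval t = 0) :
    pert i a τ v ∉ PolSp K D := by
  intro h
  obtain ⟨k, hk, hne⟩ := h σ hσ t
  apply hne
  by_cases hki : k = i
  · subst hki
    rw [pert_eval, aeval_rpoly_real]
    apply Complex.ext
    · simpa using h1
    · simpa using h2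
  · rw [pert_eval_ne a τ v hki]; exact h0 k hk hki

lemma rpoly_eval_comb {d : ℕ} (v w : Fin d → ℝ) (α β t : ℝ) :
    (rpoly 0 (α • v + β • w)).eval t = α * (rpoly 0 v).eval t + β * (rpoly 0 w).eval t := by
  simp only [rpoly, eval_add, eval_finsetSum, eval_mul, eval_C, eval_pow, eval_X, zero_mul,
    zero_add, Finset.mul_sum, ← Finset.sum_add_distrib]
  refine Finset.sum_congr rfl fun n _ => ?_
  simp; ring

lemma exists_tau {A R : ℝ} (h : |A| ≤ |R|) : ∃ τ ∈ Set.Icc (-1 : ℝ) 1, A + τ * R = 0 := by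
  by_cases hR : R = 0
  · subst hR
    simp only [abs_zero, abs_nonpos_iff] at h
    exact ⟨0, by simp, by simp [h]⟩
  · refine ⟨-A / R, ?_, by field_simp; ring⟩
    rw [Set.mem_Icc, ← abs_le, abs_div, abs_neg]
    exact (div_le_one (abs_pos.2 hR)).2 h

lemma CSet_mem_self {r : ℕ} {K : Set (Finset (Fin r))} {D : Fin r → ℕ} {i : Fin r}
    {a : ∀ k, Fin (D k) → ℂ} {v} (hv : v ∈ CSet K i a) : a ∈ PolSp K D := by
  have := hv 0 (by simp)
  rwa [pert_zero] at this

lemma convex_CSet {r : ℕ} (K : Set (Finset (Fin r))) {D : Fin r → ℕ} (i : Fin r)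
    (a : ∀ k, Fin (D k) → ℂ) : Convex ℝ (CSet K i a) := by
  intro v hv w hw α β hα hβ hαβ τ hτ
  have ha := CSet_mem_self hv
  by_contra hbad
  obtain ⟨σ, hσ, hi, t, h0, h1, h2⟩ := pert_bad ha hbad
  rw [rpoly_eval_comb] at h2
  set A := ((toPoly (a i)).eval (t : ℂ)).im
  set R₁ := (rpoly 0 v).eval t
  set R₂ := (rpoly 0 w).eval t
  have hle : |A| ≤ |R₁| ∨ |A| ≤ |R₂| := by
    by_contra hcon
    push Not at hcon
    have e1 : |A| = |τ| * |α * R₁ + β * R₂| := by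
      rw [← abs_mul, ← abs_neg]; congr 1; linarith
    have e2 : |α * R₁ + β * R₂| ≤ α * |R₁| + β * |R₂| := by
      refine (abs_add_le _ _).trans ?_
      rw [abs_mul, abs_mul, abs_of_nonneg hα, abs_of_nonneg hβ]
    have e3 : |τ| ≤ 1 := abs_le.2 hτ
    have e4 : |A| ≤ |α * R₁ + β * R₂| := by
      rw [e1]; exact mul_le_of_le_one_left (abs_nonneg _) e3
    have e5 : α * |R₁| + β * |R₂| < |A| := by
      rcases hα.eq_or_lt with h | h
      · subst h
        have : β = 1 := by linarith
        subst this; linarith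
      · have := mul_lt_mul_of_pos_left hcon.1 h
        have h3 := mul_le_mul_of_nonneg_left hcon.2.le hβ
        have : α * |A| + β * |A| = |A| := by rw [← add_mul, hαβ, one_mul]
        linarith
    linarith
  rcases hle with h | h
  · obtain ⟨τ', hτ', h3⟩ := exists_tau h
    exact pert_bad' hσ h0 h1 h3 (hv τ' hτ')
  · obtain ⟨τ', hτ', h3⟩ := exists_tau h
    exact pert_bad' hσ h0 h1 h3 (hw τ' hτ')

lemma continuous_pert {r : ℕ} {D : Fin r → ℕ} (i : Fin r) :
    Continuous fun x : (∀ k, Fin (D k) → ℂ) × ℝ × (Fin (D i) → ℝ) => pert i x.1 x.2.1 x.2.2 := by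
  unfold pert
  refine continuous_fst.add ?_
  refine (continuous_single i).comp (continuous_pi fun n => ?_)
  fun_prop

lemma CSet_eventually {r : ℕ} {K : Set (Finset (Fin r))} (hE : (∅ : Finset (Fin r)) ∈ K)
    {D : Fin r → ℕ} {i : Fin r}
    {a : ∀ k, Fin (D k) → ℂ} {v : Fin (D i) → ℝ} (hv : v ∈ CSet K i a) :
    ∀ᶠ y : (∀ k, Fin (D k) → ℂ) × (Fin (D i) → ℝ) in nhds (a, v), y.2 ∈ CSet K i y.1 := by
  refine isCompact_Icc.eventually_forall_of_forall_eventually fun τ hτ => ?_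
  have hc : Continuous fun y : ((∀ k, Fin (D k) → ℂ) × (Fin (D i) → ℝ)) × ℝ =>
      pert i y.1.1 y.2 y.1.2 :=
    (continuous_pert i).comp (by fun_prop :
      Continuous fun y : ((∀ k, Fin (D k) → ℂ) × (Fin (D i) → ℝ)) × ℝ => (y.1.1, y.2, y.1.2))
  exact hc.continuousAt.eventually ((isOpen_PolSp K hE D).mem_nhds (hv τ hτ))

/-- The real affine polynomial taking the value `w` at `u + i`. -/
def lpoly (u : ℝ) (w : ℂ) : ℝ[X] := C (w.re - w.im * u) + C w.im * X

lemma lpoly_natDegree (u : ℝ) (w : ℂ) : (lpoly u w).natDegree ≤ 1 := by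
  unfold lpoly
  refine (natDegree_add_le _ _).trans ?_
  simp only [natDegree_C, zero_le, sup_of_le_right]
  exact (natDegree_C_mul_le _ _).trans natDegree_X_le

lemma lpoly_aeval (u : ℝ) (w : ℂ) : aeval ((u : ℂ) + Complex.I) (lpoly u w) = w := by
  unfold lpoly
  simp only [map_add, aeval_C, map_mul, aeval_X, Complex.coe_algebraMap]
  apply Complex.ext <;> simp

/-- coefficients of a real polynomial -/
def rco (d : ℕ) (q : ℝ[X]) : Fin d → ℝ := fun n => q.coeff n

lemma rpoly_rco {d : ℕ} {q : ℝ[X]} (h : q.natDegree < d) : rpoly 0 (rco d q) = q :=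
  rpoly_eq h.le (coeff_eq_zero_of_natDegree_lt h)

lemma CSet_nonempty {r : ℕ} {K : Set (Finset (Fin r))} {D : Fin r → ℕ} {i : Fin r}
    {a : ∀ k, Fin (D k) → ℂ} (ha : a ∈ PolSp K D) {m ρ : ℕ} (hm : m + 1 ≤ D i)
    (hK : ∀ σ, σ ∉ K → ρ + 1 ≤ σ.card)
    (hg : Generic i m ρ fun k => toPoly (a k)) (u : ℝ) (w : ℂ) :
    ∃ v ∈ CSet K i a, aeval ((u : ℂ) + Complex.I) (rpoly 0 v) = w := by
  set T : Set ℝ := {t | ∃ S : Finset (Fin r), (S.card = ρ ∧ i ∉ S) ∧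
    (∀ j ∈ S, (toPoly (a j)).eval (t : ℂ) = 0) ∧ ((toPoly (a i)).eval (t : ℂ)).re = 0} with hT
  have hcard : ∀ A : Finset ℝ, (A : Set ℝ) ⊆ T → A.card < m := by
    intro A hA
    by_contra hcon
    push Not at hcon
    obtain ⟨B, hBA, hB⟩ := Finset.exists_subset_card_eq hcon
    have hBT : ∀ l : Fin m, ((B.equivFinOfCardEq hB).symm l : ℝ) ∈ T := fun l =>
      hA (hBA ((B.equivFinOfCardEq hB).symm l).2)
    choose S hS1 hS2 using hBT
    exact hg ⟨fun l => ((B.equivFinOfCardEq hB).symm l : ℝ), S,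
      Subtype.val_injective.comp (Equiv.injective _), hS1, hS2⟩
  have hfin : T.Finite := by
    by_contra hinf
    obtain ⟨A, hA, hAc⟩ := Set.Infinite.exists_subset_card_eq hinf m
    have := hcard A hA
    omega
  set A := hfin.toFinset with hAdef
  have hAm : A.card < m := hcard A (by simp [hAdef])
  set Q : ℝ[X] := ∏ t ∈ A, (X - C t) with hQ
  have hQd : Q.natDegree = A.card := by
    rw [hQ, natDegree_prod_of_monic _ _ fun l _ => monic_X_sub_C _]
    simp
  set W : ℂ := aeval ((u : ℂ) + Complex.I) Q with hW
  have hW0 : W ≠ 0 := by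
    rw [hW, hQ, map_prod, Finset.prod_ne_zero_iff]
    intro t _ h
    have := congrArg Complex.im h
    simp at this
  have hdeg : (Q * lpoly u (w / W)).natDegree < D i := by
    have := natDegree_mul_le (p := Q) (q := lpoly u (w / W))
    have := lpoly_natDegree u (w / W)
    omega
  refine ⟨rco (D i) (Q * lpoly u (w / W)), ?_, ?_⟩
  · intro τ _
    by_contra hbad
    obtain ⟨σ, hσ, hi, t, h0, h1, h2⟩ := pert_bad ha hbad
    have htT : t ∈ T := by
      have h3 : ρ ≤ (σ.erase i).card := by
        rw [Finset.card_erase_of_mem hi]; have := hK σ hσ; omega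
      obtain ⟨S, hS, hSc⟩ := Finset.exists_subset_card_eq h3
      refine ⟨S, ⟨hSc, fun h => (Finset.mem_erase.1 (hS h)).1 rfl⟩, fun j hj => ?_, h1⟩
      have := Finset.mem_erase.1 (hS hj)
      exact h0 j this.2 this.1
    have hzero : (rpoly 0 (rco (D i) (Q * lpoly u (w / W)))).eval t = 0 := by
      rw [rpoly_rco hdeg, eval_mul, hQ, eval_prod,
        Finset.prod_eq_zero (i := t) (by simpa [hAdef] using htT) (by simp), zero_mul]
    have h3 : pert i a 0 (rco (D i) (Q * lpoly u (w / W))) ∉ PolSp K D := by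
      refine pert_bad' hσ h0 h1 ?_
      rw [hzero] at h2 ⊢; simpa using h2
    rw [pert_zero] at h3
    exact h3 ha
  · rw [rpoly_rco hdeg, map_mul, lpoly_aeval, ← hW]
    field_simp

lemma rpoly_rco_lpoly {d : ℕ} (hd : 1 < d) (u : ℝ) (w : ℂ) :
    rpoly 0 (rco d (lpoly u w)) = lpoly u w :=
  rpoly_rco ((lpoly_natDegree u w).trans_lt hd)

lemma continuous_rco_lpoly (d : ℕ) (u : ℝ) : Continuous fun w => rco d (lpoly u w) := by
  refine continuous_pi fun n => ?_
  unfold rco lpoly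
  simp only [coeff_add, coeff_C, coeff_C_mul]
  refine Continuous.add ?_ ?_
  · split_ifs <;> fun_prop
  · fun_prop

lemma aeval_rpoly_add {d : ℕ} (v w : Fin d → ℝ) (z : ℂ) :
    aeval z (rpoly 0 (v + w)) = aeval z (rpoly 0 v) + aeval z (rpoly 0 w) := by
  simp only [aeval_rpoly, ← Finset.sum_add_distrib]
  refine Finset.sum_congr rfl fun n _ => ?_
  simp; ring

lemma aeval_rpoly_smul {d : ℕ} (v : Fin d → ℝ) (s : ℝ) (z : ℂ) :
    aeval z (rpoly 0 (s • v)) = s * aeval z (rpoly 0 v) := by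
  simp only [aeval_rpoly, Finset.mul_sum]
  refine Finset.sum_congr rfl fun n _ => ?_
  simp; ring

theorem exists_selection {P : Type*} [TopologicalSpace P] [NormalSpace P] [ParacompactSpace P]
    {r : ℕ} {K : Set (Finset (Fin r))} (hE : (∅ : Finset (Fin r)) ∈ K) {D : Fin r → ℕ} {i : Fin r}
    {m ρ : ℕ} (hm : m + 1 ≤ D i) (hDi : 1 < D i) (hK : ∀ σ, σ ∉ K → ρ + 1 ≤ σ.card)
    (fs : P → ∀ k, Fin (D k) → ℂ) (hfs : Continuous fs) (hP : ∀ p, fs p ∈ PolSp K D)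
    (hg : ∀ p, Generic i m ρ fun k => toPoly (fs p k)) (u : ℝ) (c : P → ℝ) (hc : Continuous c)
    (h0 : ∀ p, 1 / 6 ≤ c p → c p ≤ 1 / 2 → rco (D i) (lpoly u (Complex.I *
      (toPoly (fs p i)).eval ((u : ℂ) + Complex.I))) ∈ CSet K i (fs p)) :
    ∃ v : P → Fin (D i) → ℝ, Continuous v ∧ ∀ p, 1 / 6 ≤ c p →
      aeval ((u : ℂ) + Complex.I) (rpoly 0 (v p)) =
        Complex.I * (toPoly (fs p i)).eval ((u : ℂ) + Complex.I) ∧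
      v p ∈ CSet K i (fs p) ∧
      (c p ≤ 1 / 3 → v p = rco (D i) (lpoly u (Complex.I *
        (toPoly (fs p i)).eval ((u : ℂ) + Complex.I)))) := by
  set W : P → ℂ := fun p => Complex.I * (toPoly (fs p i)).eval ((u : ℂ) + Complex.I) with hW
  have hWc : Continuous W := continuous_const.mul
    (continuous_eval_toPoly ((continuous_apply i).comp hfs) continuous_const)
  set v0 : P → Fin (D i) → ℝ := fun p => rco (D i) (lpoly u (W p)) with hv0
  have hv0c : Continuous v0 := (continuous_rco_lpoly _ u).comp hWc
  let tt : P → Set (Fin (D i) → ℝ) := fun p => {v | 1 / 6 ≤ c p →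
      aeval ((u : ℂ) + Complex.I) (rpoly 0 v) = W p ∧ v ∈ CSet K i (fs p) ∧
      (c p ≤ 1 / 3 → v = v0 p)}
  have ht : ∀ p, Convex ℝ (tt p) := by
    intro p v hv w hw α β hα hβ hαβ hcp
    obtain ⟨a1, a2, a3⟩ := hv hcp
    obtain ⟨b1, b2, b3⟩ := hw hcp
    refine ⟨?_, convex_CSet K i _ a2 b2 hα hβ hαβ, fun h => ?_⟩
    · rw [aeval_rpoly_add, aeval_rpoly_smul, aeval_rpoly_smul, a1, b1, ← add_mul]
      rw [← Complex.ofReal_add, hαβ]; simp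
    · rw [a3 h, b3 h, ← add_smul, hαβ, one_smul]
  have H : ∀ p : P, ∃ U ∈ nhds p, ∃ g : P → Fin (D i) → ℝ, ContinuousOn g U ∧
      ∀ y ∈ U, g y ∈ tt y := by
    intro p
    by_cases hcp : c p < 1 / 2
    · refine ⟨{q | c q < 1 / 2}, (isOpen_lt hc continuous_const).mem_nhds hcp, v0,
        hv0c.continuousOn, fun q hq hq6 => ?_⟩
      refine ⟨?_, h0 q hq6 (le_of_lt hq), fun _ => rfl⟩
      simp only [hv0]
      rw [rpoly_rco_lpoly hDi, lpoly_aeval]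
    · push Not at hcp
      obtain ⟨w, hw, hwW⟩ := CSet_nonempty (hP p) hm hK (hg p) u (W p)
      let g : P → Fin (D i) → ℝ := fun q => w + rco (D i) (lpoly u (W q - W p))
      have hgc : Continuous g :=
        continuous_const.add ((continuous_rco_lpoly _ u).comp (hWc.sub continuous_const))
      have hgp : g p = w := by
        simp only [g, sub_self]
        funext n
        simp [rco, lpoly]
      have hev : ∀ᶠ q in nhds p, g q ∈ CSet K i (fs q) := by
        have hcont : Continuous fun q => (fs q, g q) := hfs.prodMk hgc
        have := CSet_eventually hE (a := fs p) (v := g p) (by rw [hgp]; exact hw)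
        exact hcont.continuousAt.eventually this
      have hev2 : ∀ᶠ q in nhds p, 1 / 3 < c q :=
        (isOpen_lt continuous_const hc).mem_nhds (show (1 / 3 : ℝ) < c p by linarith)
      refine ⟨_, hev.and hev2, g, hgc.continuousOn, fun q hq _ => ⟨?_, hq.1, fun h => ?_⟩⟩
      · simp only [g]
        rw [aeval_rpoly_add, rpoly_rco_lpoly hDi, lpoly_aeval, hwW]; ring
      · have := hq.2
        linarith
  obtain ⟨v, hv⟩ := exists_continuous_forall_mem_convex_of_local ht H
  exact ⟨v, v.continuous, hv⟩

end

section
open Polynomial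
/-! ### Part 5: helper lemmas for the main deformation -/

/-- Homotopy rel `S` of families in `PolSp K D`. -/
def PH {P : Type*} [TopologicalSpace P] {r : ℕ} (K : Set (Finset (Fin r))) (D : Fin r → ℕ)
    (S : Set P) (f g : P → ∀ k, Fin (D k) → ℂ) : Prop :=
  ∃ F G : C(P, ↥(PolSp K D)), (∀ p, (F p).1 = f p) ∧ (∀ p, (G p).1 = g p) ∧ F.HomotopicRel G S

lemma PH.trans {P : Type*} [TopologicalSpace P] {r : ℕ} {K : Set (Finset (Fin r))} {D : Fin r → ℕ}
    {S : Set P} {f g h : P → ∀ k, Fin (D k) → ℂ} (h1 : PH K D S f g) (h2 : PH K D S g h) :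
    PH K D S f h := by
  obtain ⟨F, G, hF, hG, H⟩ := h1
  obtain ⟨F', G', hF', hG', H'⟩ := h2
  have : G = F' := by
    ext1 p; apply Subtype.ext; rw [hG, hF']
  subst this
  exact ⟨F, G', hF, hG', H.trans H'⟩

lemma PH.of {P : Type*} [TopologicalSpace P] {r : ℕ} {K : Set (Finset (Fin r))} {D : Fin r → ℕ}
    {S : Set P} {f g : P → ∀ k, Fin (D k) → ℂ} (H : unitInterval × P → ∀ k, Fin (D k) → ℂ)
    (hc : Continuous H) (hH : ∀ x, H x ∈ PolSp K D) (h0 : ∀ p, H (0, p) = f p)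
    (h1 : ∀ p, H (1, p) = g p) (hS : ∀ s, ∀ p ∈ S, H (s, p) = f p) : PH K D S f g := by
  have hc0 : Continuous fun p : P => H (0, p) := hc.comp (by fun_prop)
  have hc1 : Continuous fun p : P => H (1, p) := hc.comp (by fun_prop)
  refine ⟨⟨fun p => ⟨H (0, p), hH _⟩, hc0.subtype_mk _⟩,
    ⟨fun p => ⟨H (1, p), hH _⟩, hc1.subtype_mk _⟩, h0, h1, ⟨⟨⟨⟨fun x => ⟨H x, hH x⟩,
      hc.subtype_mk _⟩, fun p => rfl, fun p => rfl⟩, fun s p hp => ?_⟩⟩⟩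
  apply Subtype.ext
  change H (s, p) = H (0, p)
  rw [hS s p hp, h0]

/-- Multiply the `i`-th component by `X - y`. -/
def tmul {r : ℕ} (i : Fin r) (y : ℂ) (g : Fin r → ℂ[X]) : Fin r → ℂ[X] :=
  fun k => if k = i then g k * (X - C y) else g k

/-- All roots lie in the half plane `re < B`. -/
def UR {r : ℕ} (B : ℝ) (q : Fin r → ℂ[X]) : Prop := ∀ k z, (q k).eval z = 0 → z.re < B

section
variable {r : ℕ} {K : Set (Finset (Fin r))} {D D' : Fin r → ℕ} {i : Fin r}

lemma MT_tmul (hD' : ∀ k, D' k = if k = i then D k + 1 else D k) (y : ℂ) {g : Fin r → ℂ[X]}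
    (hg : MT D g) : MT D' (tmul i y g) := by
  intro k
  unfold tmul
  rw [hD' k]
  split_ifs with h
  · refine ⟨(hg k).1.mul (monic_X_sub_C y), ?_⟩
    rw [(hg k).1.natDegree_mul (monic_X_sub_C y), natDegree_X_sub_C, (hg k).2]
  · exact hg k

lemma Good_tmul (hK2 : ∀ σ, σ ∉ K → 2 ≤ σ.card) {y : ℂ} {g : Fin r → ℂ[X]} (hg : Good K g)
    {B : ℝ} (hy : y.im ≠ 0 ∨ (UR B g ∧ B < y.re)) : Good K (tmul i y g) := by
  intro σ hσ t
  by_cases hty : (t : ℂ) = y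
  · rcases hy with h | ⟨h, hB⟩
    · exfalso; apply h; rw [← hty]; simp
    · obtain ⟨k, hk, hki⟩ := Finset.exists_mem_ne (hK2 σ hσ) i
      refine ⟨k, hk, fun h0 => ?_⟩
      rw [tmul, if_neg hki] at h0
      have := h k _ h0
      rw [hty] at this
      linarith
  · obtain ⟨k, hk, hne⟩ := hg σ hσ t
    refine ⟨k, hk, ?_⟩
    unfold tmul
    split_ifs
    · simpa [sub_eq_zero, hty] using hne
    · exact hne

lemma Good_of_tmul {y : ℂ} {g : Fin r → ℂ[X]} (hg : Good K (tmul i y g)) : Good K g := by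
  intro σ hσ t
  obtain ⟨k, hk, hne⟩ := hg σ hσ t
  refine ⟨k, hk, fun h => hne ?_⟩
  unfold tmul
  split_ifs
  · rw [eval_mul, h, zero_mul]
  · exact h

/-- Translation of the roots. -/
def shf (s : ℝ) (g : Fin r → ℂ[X]) : Fin r → ℂ[X] := fun k => (g k).comp (X + C (s : ℂ))

lemma shf_eval (s : ℝ) (g : Fin r → ℂ[X]) (k : Fin r) (z : ℂ) :
    (shf s g k).eval z = (g k).eval (z + s) := by
  simp [shf]

lemma shf_zero (g : Fin r → ℂ[X]) : shf 0 g = g := by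
  funext k; simp [shf]

lemma MT_shf (s : ℝ) {g : Fin r → ℂ[X]} (hg : MT D g) : MT D (shf s g) := by
  intro k
  refine ⟨(hg k).1.comp_X_add_C _, ?_⟩
  unfold shf
  rw [natDegree_comp, natDegree_X_add_C, mul_one, (hg k).2]

lemma Good_shf (s : ℝ) {g : Fin r → ℂ[X]} (hg : Good K g) : Good K (shf s g) := by
  intro σ hσ t
  obtain ⟨k, hk, hne⟩ := hg σ hσ (t + s)
  refine ⟨k, hk, ?_⟩
  rw [shf_eval]; simpa using hne

lemma UR_shf {B s M : ℝ} {g : Fin r → ℂ[X]} (hg : UR M g) (h : M - s ≤ B) : UR B (shf s g) := by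
  intro k z hz
  rw [shf_eval] at hz
  have := hg k _ hz
  simp at this
  linarith

lemma CC_tmul {P : Type*} [TopologicalSpace P] {g : P → Fin r → ℂ[X]} (hg : ∀ k, CC fun p => g p k)
    {y : P → ℂ} (hy : Continuous y) (k : Fin r) : CC fun p => tmul i (y p) (g p) k := by
  unfold tmul
  split_ifs
  · exact (hg k).mul ((CC_const X).sub (CC_C hy))
  · exact hg k

lemma CC_shf {P : Type*} [TopologicalSpace P] {g : P → Fin r → ℂ[X]} (hg : ∀ k, CC fun p => g p k)
    (hM : ∀ p, MT D (g p))
    {s : P → ℝ} (hs : Continuous s) (k : Fin r) : CC fun p => shf (s p) (g p) k :=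
  (hg k).shift (fun p => ((hM p k).2).le) (Complex.continuous_ofReal.comp hs)

lemma toSp_tmul_sub (x s : ℂ) (a : Fin r → ℂ[X]) :
    toSp D' (tmul i x a) - Pi.single (M := fun k => Fin (D' k) → ℂ) i (s • ofPoly (D' i) (a i)) =
      toSp D' (tmul i (x + s) a) := by
  funext k n
  by_cases hk : k = i
  · subst hk
    simp only [Pi.sub_apply, Pi.single_eq_same, toSp, ofPoly, tmul, if_true, Pi.smul_apply,
      smul_eq_mul]
    rw [← coeff_C_mul, ← coeff_sub]
    congr 1
    rw [C_add]; ring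
  · simp [toSp, ofPoly, tmul, hk, Pi.single_eq_of_ne hk]

end

/-- Clamping to `[0,1]`. -/
def clp (s : ℝ) : ℝ := max 0 (min 1 s)

lemma continuous_clp : Continuous clp := by unfold clp; fun_prop

lemma clp_nonneg (s : ℝ) : 0 ≤ clp s := le_max_left _ _

lemma clp_le_one (s : ℝ) : clp s ≤ 1 := max_le zero_le_one (min_le_left _ _)

lemma clp_of_le {s : ℝ} (h : s ≤ 0) : clp s = 0 := by
  unfold clp; rw [min_eq_right (by linarith), max_eq_left h]

lemma clp_of_ge {s : ℝ} (h : 1 ≤ s) : clp s = 1 := by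
  unfold clp; rw [min_eq_left h, max_eq_right zero_le_one]

lemma clp_of_mem {s : ℝ} (h : 0 ≤ s) (h' : s ≤ 1) : clp s = s := by
  unfold clp; rw [min_eq_right h', max_eq_right h]

lemma toPoly_eval_sub_le {d : ℕ} (a b : Fin d → ℂ) (z : ℂ) :
    ‖(toPoly a).eval z - (toPoly b).eval z‖ ≤ ‖a - b‖ * ∑ n : Fin d, ‖z‖ ^ (n : ℕ) := by
  have : (toPoly a).eval z - (toPoly b).eval z = ∑ n : Fin d, (a - b) n * z ^ (n : ℕ) := by
    unfold toPoly
    simp only [eval_add, eval_pow, eval_X, eval_finsetSum, eval_mul, eval_C, Pi.sub_apply,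
      sub_mul, Finset.sum_sub_distrib]
    ring
  rw [this, Finset.mul_sum]
  refine (norm_sum_le _ _).trans (Finset.sum_le_sum fun n _ => ?_)
  rw [norm_mul, norm_pow]
  gcongr
  exact norm_le_pi_norm (a - b) n

lemma rco_lpoly_norm (d : ℕ) (u : ℝ) (w : ℂ) : ‖rco d (lpoly u w)‖ ≤ (1 + |u|) * ‖w‖ := by
  rw [pi_norm_le_iff_of_nonneg (by positivity)]
  intro n
  have h1 := Complex.abs_re_le_norm w
  have h2 := Complex.abs_im_le_norm w
  have h3 := abs_nonneg u
  have h4 := norm_nonneg w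
  unfold rco lpoly
  simp only [coeff_add, coeff_C, coeff_C_mul, coeff_X, Real.norm_eq_abs]
  rcases n with ⟨n, hn⟩
  simp only
  rcases n with _ | _ | n
  · simp
    calc |w.re - w.im * u| ≤ |w.re| + |w.im * u| := abs_sub _ _
      _ = |w.re| + |w.im| * |u| := by rw [abs_mul]
      _ ≤ _ := by nlinarith
  · simp; nlinarith
  · simp; positivity

lemma pert_dist {r : ℕ} {D : Fin r → ℕ} (i : Fin r) (a b : ∀ k, Fin (D k) → ℂ) (τ : ℝ)
    (hτ : |τ| ≤ 1) (v : Fin (D i) → ℝ) : dist (pert i a τ v) b ≤ dist a b + ‖v‖ := by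
  have h1 : dist (pert i a τ v) a ≤ ‖v‖ := by
    rw [dist_eq_norm]
    unfold pert
    rw [add_sub_cancel_left, Pi.norm_single,
      pi_norm_le_iff_of_nonneg (norm_nonneg _)]
    intro n
    rw [norm_mul, Complex.norm_I, one_mul, Complex.norm_real, norm_mul]
    have := norm_le_pi_norm v n
    have h3 : ‖τ‖ ≤ 1 := hτ
    nlinarith [norm_nonneg (v n), norm_nonneg τ]
  linarith [dist_triangle (pert i a τ v) a b]

end

section
open Polynomial
/-! ### Part 6: the main deformation -/

lemma toPoly_affine_eval {d : ℕ} (a b : Fin d → ℂ) (s : ℝ) (z : ℂ) :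
    (toPoly (a + s • (b - a))).eval z =
      (1 - s) * (toPoly a).eval z + s * (toPoly b).eval z := by
  unfold toPoly
  simp only [eval_add, eval_pow, eval_X, eval_finsetSum, eval_mul, eval_C, Pi.add_apply,
    Pi.smul_apply, Pi.sub_apply, Complex.real_smul, mul_add, Finset.mul_sum]
  have : ∀ n : Fin d, (a n + s * (b n - a n)) * z ^ (n : ℕ) =
      (1 - s) * (a n * z ^ (n : ℕ)) + s * (b n * z ^ (n : ℕ)) := fun n => by ring
  simp only [this, Finset.sum_add_distrib]
  ring

theorem main_deform {ι : Type} [Fintype ι] {r : ℕ} {K : Set (Finset (Fin r))}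
    (hE : (∅ : Finset (Fin r)) ∈ K) {ρ m : ℕ} (hρ : 1 ≤ ρ) (hm0 : 1 ≤ m)
    (hK : ∀ σ, σ ∉ K → ρ + 1 ≤ σ.card) {D D' : Fin r → ℕ} {i : Fin r}
    (hD' : ∀ k, D' k = if k = i then D k + 1 else D k) (hm : ∀ k, m ≤ D k)
    (hdim : Fintype.card ι < 2 * m * ρ) {x : ℂ} {B : ℝ} (hx : B < x.re)
    (f : (ι → unitInterval) → ∀ k, Fin (D' k) → ℂ) (hf : Continuous f)
    (hfP : ∀ p, f p ∈ PolSp K D')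
    (a : (ι → unitInterval) → Fin r → ℂ[X]) (haC : ∀ k, CC fun p => a p k)
    (haM : ∀ p, MT D (a p)) (c : (ι → unitInterval) → ℝ) (hc : Continuous c)
    (hcol : ∀ p, c p < 1 → Good K (a p) ∧ UR B (a p) ∧ f p = toSp D' (tmul i x (a p))) :
    ∃ G : (ι → unitInterval) → Fin r → ℂ[X], (∀ k, CC fun p => G p k) ∧ (∀ p, MT D (G p)) ∧
      (∀ p, Good K (G p)) ∧ (∀ p, UR B (G p)) ∧ (∀ p, c p ≤ 0 → G p = a p) ∧
      PH K D' {p | c p ≤ 0} f (fun p => toSp D' (tmul i x (G p))) := by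
  have hK2 : ∀ σ, σ ∉ K → 2 ≤ σ.card := fun σ hσ => by have := hK σ hσ; omega
  have hDi : D' i = D i + 1 := by rw [hD' i, if_pos rfl]
  have hmD' : ∀ k, m ≤ D' k := by
    intro k; have := hm k; rw [hD' k]; split_ifs <;> omega
  set x' : ℂ := (x.re : ℂ) + Complex.I with hx'
  set δ : ℂ := x' - x with hδ
  have hδre : δ.re = 0 := by simp [hδ, hx']
  set γ : (ι → unitInterval) → ℝ := fun p => clp (6 * c p) with hγ
  set β : (ι → unitInterval) → ℝ := fun p => clp (2 - 2 * c p) with hβ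
  set θ : (ι → unitInterval) → ℝ := fun p => clp (6 * c p - 1) with hθ
  set μ : (ι → unitInterval) → ℝ := fun p => min (γ p) (β p) with hμ
  have hγc : Continuous γ := continuous_clp.comp (by fun_prop)
  have hβc : Continuous β := continuous_clp.comp (by fun_prop)
  have hθc : Continuous θ := continuous_clp.comp (by fun_prop)
  have hμc : Continuous μ := hγc.min hβc
  have hγ0 : ∀ p, c p ≤ 0 → γ p = 0 := fun p h => clp_of_le (by linarith)
  have hγ1 : ∀ p, 1 / 6 ≤ c p → γ p = 1 := fun p h => clp_of_ge (by linarith)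
  have hβ1 : ∀ p, c p ≤ 1 / 2 → β p = 1 := fun p h => clp_of_ge (by linarith)
  have hβ0 : ∀ p, 1 ≤ c p → β p = 0 := fun p h => clp_of_le (by linarith)
  have hθ0 : ∀ p, c p ≤ 1 / 6 → θ p = 0 := fun p h => clp_of_le (by linarith)
  have hθ1 : ∀ p, 1 / 3 ≤ c p → θ p = 1 := fun p h => clp_of_ge (by linarith)
  have hμγ : ∀ p, c p ≤ 1 / 2 → μ p = γ p := fun p h => by
    simp only [hμ]; rw [hβ1 p h]; exact min_eq_left (clp_le_one _)
  have hμ0 : ∀ p, 1 ≤ c p → μ p = 0 := fun p h => by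
    simp only [hμ]; rw [hβ0 p h]; exact min_eq_right (clp_nonneg _)
  -- the point y
  have hyre : ∀ s : ℝ, (x + s * δ).re = x.re := fun s => by simp [hδre]
  -- Stage I
  let mv : ℝ → (ι → unitInterval) → ∀ k, Fin (D' k) → ℂ := fun s p =>
    f p - Pi.single (M := fun k => Fin (D' k) → ℂ) i (((s : ℂ) * δ) • ofPoly (D' i) (a p i))
  have hmvc : ∀ {Q : Type} [TopologicalSpace Q] (s : Q → ℝ) (p : Q → (ι → unitInterval)),
      Continuous s → Continuous p → Continuous fun q => mv (s q) (p q) := by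
    intro Q _ s p hs hp
    refine (hf.comp hp).sub ((continuous_single i).comp ?_)
    refine Continuous.smul ((Complex.continuous_ofReal.comp hs).mul continuous_const) ?_
    exact continuous_pi fun n => (haC i n).comp hp
  have hmv1 : ∀ s p, c p < 1 → mv s p = toSp D' (tmul i (x + s * δ) (a p)) := by
    intro s p hp
    simp only [mv]
    rw [(hcol p hp).2.2]
    exact toSp_tmul_sub x _ (a p)
  have hmv0 : ∀ p, mv 0 p = f p := by
    intro p; simp only [mv]; simp
  have hmvP : ∀ s p, c p < 1 ∨ s = 0 → mv s p ∈ PolSp K D' := by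
    intro s p h
    rcases h with h | h
    · rw [hmv1 s p h]
      refine toSp_mem (MT_tmul hD' _ (haM p)) (Good_tmul hK2 (hcol p h).1 (B := B) (Or.inr ⟨(hcol p h).2.1, ?_⟩))
      rw [hyre]; exact hx
    · rw [h, hmv0]; exact hfP p
  set fm : (ι → unitInterval) → ∀ k, Fin (D' k) → ℂ := fun p => mv (μ p) p with hfm
  have hfmc : Continuous fm := hmvc μ id hμc continuous_id
  have hfmP : ∀ p, fm p ∈ PolSp K D' := by
    intro p
    apply hmvP
    rcases lt_or_ge (c p) 1 with h | h
    · exact Or.inl h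
    · exact Or.inr (hμ0 p h)
  have stage1 : PH K D' {p | c p ≤ 0} f fm := by
    refine PH.of (fun z => mv (z.1 * μ z.2) z.2)
      (hmvc _ _ ((continuous_subtype_val.comp continuous_fst).mul (hμc.comp continuous_snd))
        continuous_snd) ?_ ?_ ?_ ?_
    · rintro ⟨s, p⟩
      apply hmvP
      rcases lt_or_ge (c p) 1 with h | h
      · exact Or.inl h
      · right; simp [hμ0 p h]
    · intro p; simp [hmv0]
    · intro p; simp [hfm]
    · intro s p hp
      have h1 : c p ≤ 0 := hp
      simp only
      rw [hμγ p (by linarith), hγ0 p h1, mul_zero, hmv0]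
  -- fm in the collar
  have hfm_collar : ∀ p, c p ≤ 1 / 2 → fm p = toSp D' (tmul i (x + γ p * δ) (a p)) := by
    intro p h
    simp only [hfm]
    rw [hmv1 _ _ (by linarith), hμγ p h]
  have hfm_root : ∀ p, c p ≤ 1 / 2 → (toPoly (fm p i)).eval (x + γ p * δ) = 0 := by
    intro p h
    rw [hfm_collar p h, toPoly_toSp (MT_tmul hD' _ (haM p))]
    simp [tmul]
  -- Stage II
  obtain ⟨ε, hε, hεP⟩ : ∃ ε > 0, ∀ p b, dist b (fm p) < ε → b ∈ PolSp K D' := by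
    obtain ⟨ε, hε, h⟩ := (isCompact_range hfmc).exists_thickening_subset_open
      (isOpen_PolSp K hE D') (by rintro _ ⟨p, rfl⟩; exact hfmP p)
    exact ⟨ε, hε, fun p b hb => h (Metric.mem_thickening_iff.2 ⟨fm p, ⟨p, rfl⟩, hb⟩)⟩
  set Mx : ℝ := ∑ n : Fin (D' i), ‖x'‖ ^ (n : ℕ) with hMx
  have hMx0 : 0 ≤ Mx := Finset.sum_nonneg fun n _ => by positivity
  set L : ℝ := 1 + (1 + |x.re|) * Mx with hL
  have hL1 : 1 ≤ L := by
    have : 0 ≤ (1 + |x.re|) * Mx := by positivity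
    linarith
  obtain ⟨fs, hfsc, hfsd, hfsg⟩ := exists_generic_approx D' i m ρ hmD' hdim fm hfmc
    (show 0 < ε / (2 * L) by positivity)
  have hεL : ε / (2 * L) * L = ε / 2 := by field_simp
  have hεL2 : ε / (2 * L) ≤ ε / 2 := by rw [← hεL]; exact le_mul_of_one_le_right (by positivity) hL1
  have hfsP : ∀ p, fs p ∈ PolSp K D' := fun p => hεP p _ (by have := hfsd p; linarith)
  set w0 : (ι → unitInterval) → (Fin (D' i) → ℝ) := fun p => rco (D' i) (lpoly x.re (Complex.I *
      (toPoly (fs p i)).eval x')) with hw0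
  have hyx' : ∀ p, 1 / 6 ≤ c p → x + γ p * δ = x' := by
    intro p h; rw [hγ1 p h, hδ]; simp
  have hsmall : ∀ p, 1 / 6 ≤ c p → c p ≤ 1 / 2 → dist (fs p) (fm p) + ‖w0 p‖ < ε := by
    intro p h1 h2
    have h3 := rco_lpoly_norm (D' i) x.re (Complex.I * (toPoly (fs p i)).eval x')
    rw [norm_mul, Complex.norm_I, one_mul] at h3
    have h4 := toPoly_eval_sub_le (fs p i) (fm p i) x'
    have h5 := hfm_root p h2
    rw [hyx' p h1] at h5
    rw [h5, sub_zero] at h4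
    have h6 : ‖fs p i - fm p i‖ ≤ dist (fs p) (fm p) := by
      rw [dist_eq_norm]; exact norm_le_pi_norm (fs p - fm p) i
    have h7 : ‖w0 p‖ ≤ (1 + |x.re|) * (dist (fs p) (fm p) * Mx) := by
      refine h3.trans ?_
      gcongr
      refine h4.trans ?_
      gcongr
    have h8 := hfsd p
    calc dist (fs p) (fm p) + ‖w0 p‖ ≤ dist (fs p) (fm p) * L := by rw [hL]; linarith
      _ ≤ ε / (2 * L) * L := by gcongr
      _ < ε := by rw [hεL]; linarith
  obtain ⟨v, hvc, hv⟩ := exists_selection hE (D := D') (i := i) (m := m) (ρ := ρ)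
    (by have := hm i; omega) (by have := hm i; omega) hK fs hfsc hfsP hfsg x.re c hc (by
      intro p h1 h2 τ hτ
      apply hεP p
      refine (pert_dist i _ _ τ (abs_le.2 hτ) _).trans_lt ?_
      exact hsmall p h1 h2)
  let f2 : ℝ → (ι → unitInterval) → ∀ k, Fin (D' k) → ℂ := fun s p => fm p + s • (fs p - fm p)
  have hf2d : ∀ s p, 0 ≤ s → s ≤ 1 → dist (f2 s p) (fm p) ≤ dist (fs p) (fm p) := by
    intro s p h0 h1
    simp only [f2]
    rw [dist_eq_norm, add_sub_cancel_left, norm_smul, Real.norm_eq_abs, abs_of_nonneg h0,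
      dist_eq_norm]
    exact mul_le_of_le_one_left (norm_nonneg _) h1
  have stage2 : PH K D' {p | c p ≤ 0} fm (fun p => f2 (θ p) p) := by
    refine PH.of (fun z => f2 (z.1 * θ z.2) z.2) ?_ ?_ ?_ ?_ ?_
    · simp only [f2]
      have h1 := hfmc.comp (continuous_snd (X := unitInterval))
      have h2 := hfsc.comp (continuous_snd (X := unitInterval))
      exact h1.add (((continuous_subtype_val.comp continuous_fst).mul
        (hθc.comp continuous_snd)).smul (h2.sub h1))
    · rintro ⟨s, p⟩
      apply hεP p
      have h1 := hf2d (s * θ p) p (mul_nonneg s.2.1 (clp_nonneg _))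
        (mul_le_one₀ s.2.2 (clp_nonneg _) (clp_le_one _))
      have := hfsd p
      exact h1.trans_lt (by linarith)
    · intro p; simp [f2]
    · intro p; simp [f2]
    · intro s p hp
      have h1 : c p ≤ 0 := hp
      simp [f2, hθ0 p (by linarith)]
  let f3 : (ι → unitInterval) → ∀ k, Fin (D' k) → ℂ := fun p => pert i (f2 (θ p) p) (θ p) (v p)
  have hf2c : Continuous fun p => f2 (θ p) p := hfmc.add (hθc.smul (hfsc.sub hfmc))
  have hf3c : Continuous f3 :=
    (continuous_pert i).comp (hf2c.prodMk (hθc.prodMk hvc))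
  have stage3P : ∀ (s : unitInterval) p, pert i (f2 (θ p) p) (s * θ p) (v p) ∈ PolSp K D' := by
    intro s p
    rcases le_total (c p) (1 / 6) with h | h
    · rw [hθ0 p h, mul_zero, pert_zero]
      simpa [f2] using hfmP p
    · rcases le_total (c p) (1 / 3) with h' | h'
      · apply hεP p
        have h1 : |(s : ℝ) * θ p| ≤ 1 := by
          rw [abs_of_nonneg (mul_nonneg s.2.1 (clp_nonneg _))]
          exact mul_le_one₀ s.2.2 (clp_nonneg _) (clp_le_one _)
        refine (pert_dist i _ (fm p) _ h1 _).trans_lt ?_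
        rw [(hv p h).2.2 h']
        have h2 := hsmall p h (by linarith)
        have h3 := hf2d (θ p) p (clp_nonneg _) (clp_le_one _)
        exact lt_of_le_of_lt (add_le_add_left h3 _) h2
      · rw [hθ1 p h', mul_one]
        have : f2 1 p = fs p := by simp [f2]
        rw [this]
        exact (hv p h).2.1 _ ⟨by linarith [s.2.1], s.2.2⟩
  have stage3 : PH K D' {p | c p ≤ 0} (fun p => f2 (θ p) p) f3 := by
    refine PH.of (fun z => pert i (f2 (θ z.2) z.2) (z.1 * θ z.2) (v z.2)) ?_
      (fun z => stage3P z.1 z.2) ?_ ?_ ?_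
    · exact (continuous_pert i).comp ((hf2c.comp continuous_snd).prodMk
        (((continuous_subtype_val.comp continuous_fst).mul (hθc.comp continuous_snd)).prodMk
          (hvc.comp continuous_snd)))
    · intro p; simp [pert_zero]
    · intro p; simp [f3]
    · intro s p hp
      have h1 : c p ≤ 0 := hp
      simp [hθ0 p (by linarith), pert_zero]
  have hf3P : ∀ p, f3 p ∈ PolSp K D' := by
    intro p; have := stage3P 1 p; simpa [f3] using this
  set y : (ι → unitInterval) → ℂ := fun p => x + γ p * δ with hy
  have hyc : Continuous y :=
    continuous_const.add ((Complex.continuous_ofReal.comp hγc).mul continuous_const)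
  have hf3root : ∀ p, (toPoly (f3 p i)).eval (y p) = 0 := by
    intro p
    simp only [f3]
    rw [pert_eval]
    rcases le_total (c p) (1 / 6) with h | h
    · rw [hθ0 p h]
      have := hfm_root p (by linarith)
      simpa [f2] using this
    · have h1 : (1 - (θ p : ℂ)) * (toPoly (fm p i)).eval x' = 0 := by
        rcases le_total (c p) (1 / 3) with h' | h'
        · have := hfm_root p (by linarith)
          rw [hyx' p h] at this
          rw [this, mul_zero]
        · rw [hθ1 p h']; simp
      have h2 : f2 (θ p) p i = fm p i + θ p • (fs p i - fm p i) := rfl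
      simp only [hy]
      rw [hyx' p h, h2, toPoly_affine_eval, h1, (hv p h).1]
      linear_combination (θ p : ℂ) * (toPoly (fs p i)).eval x' * Complex.I_mul_I
  let g : (ι → unitInterval) → Fin r → ℂ[X] := fun p k =>
    if k = i then toPoly (f3 p k) /ₘ (X - C (y p)) else toPoly (f3 p k)
  have hf3k : ∀ k, Continuous fun p => f3 p k := fun k => (continuous_apply k).comp hf3c
  have hgC : ∀ k, CC fun p => g p k := by
    intro k
    simp only [g]
    split_ifs
    · exact (CC_toPoly (hf3k k)).divX (fun p => toPoly_natDegree _) hyc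
    · exact CC_toPoly (hf3k k)
  have hgt : ∀ p, tmul i (y p) (g p) = fun k => toPoly (f3 p k) := by
    intro p; funext k
    unfold tmul
    simp only [g]
    split_ifs with h
    · subst h
      rw [mul_comm]
      exact mul_divByMonic_eq_iff_isRoot.2 (hf3root p)
    · rfl
  have hgM : ∀ p, MT D (g p) := by
    intro p k
    simp only [g]
    split_ifs with h
    · subst h
      refine ⟨?_, ?_⟩
      · have h1 := congrFun (hgt p) k
        simp only [tmul, if_true] at h1
        have h2 : (g p k * (X - C (y p))).Monic := by rw [h1]; exact toPoly_monic _
        have h3 := Monic.of_mul_monic_right (monic_X_sub_C (y p)) h2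
        simpa [g] using h3
      · rw [natDegree_divByMonic _ (monic_X_sub_C _), toPoly_natDegree, natDegree_X_sub_C, hDi]
        simp
    · refine ⟨toPoly_monic _, ?_⟩
      rw [toPoly_natDegree, hD' k, if_neg h]
  have hgG : ∀ p, Good K (g p) := by
    intro p
    apply Good_of_tmul (i := i) (y := y p)
    rw [hgt p]
    exact hf3P p
  have hga : ∀ p, c p ≤ 1 / 6 → g p = a p := by
    intro p h
    have h1 : f3 p = fm p := by
      simp only [f3]
      rw [hθ0 p h, pert_zero]; simp [f2]
    have h2 := hgt p
    rw [h1, hfm_collar p (by linarith)] at h2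
    funext k
    have h3 := congrFun h2 k
    rw [toPoly_toSp (MT_tmul hD' _ (haM p))] at h3
    unfold tmul at h3
    split_ifs at h3 with hk
    · exact mul_right_cancel₀ (monic_X_sub_C (y p)).ne_zero h3
    · exact h3
  obtain ⟨M0, hM0⟩ : ∃ M0 : ℝ, ∀ p, UR M0 (g p) := by
    have hcont : Continuous fun p => toSp D (g p) := continuous_toSp D hgC
    obtain ⟨R, hR⟩ := (isCompact_range hcont).isBounded.exists_norm_le
    refine ⟨R + 2, fun p k z hz => ?_⟩
    rw [← toPoly_toSp (hgM p) k] at hz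
    have h1 := root_bound _ hz
    have h2 := norm_le_pi_norm (toSp D (g p)) k
    have h3 := hR _ ⟨p, rfl⟩
    have h4 := Complex.re_le_norm z
    simp only at h3
    linarith
  set M : ℝ := |M0| + |B| with hM
  have hM1 : M0 - M ≤ B := by
    have := le_abs_self M0; have := neg_abs_le B; linarith
  have hMnn : 0 ≤ M := by positivity
  let G : (ι → unitInterval) → Fin r → ℂ[X] := fun p => shf (M * γ p) (g p)
  have hGM : ∀ p, MT D (G p) := fun p => MT_shf _ (hgM p)
  have hGC : ∀ k, CC fun p => G p k := CC_shf hgC hgM (continuous_const.mul hγc)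
  have hGG : ∀ p, Good K (G p) := fun p => Good_shf _ (hgG p)
  have hGU : ∀ p, UR B (G p) := by
    intro p
    rcases le_total (c p) (1 / 6) with h | h
    · simp only [G]
      rw [hga p h]
      refine UR_shf (hcol p (by linarith)).2.1 ?_
      have : 0 ≤ M * γ p := mul_nonneg hMnn (clp_nonneg _)
      linarith
    · refine UR_shf (hM0 p) ?_
      rw [hγ1 p h, mul_one]; exact hM1
  have hGa : ∀ p, c p ≤ 0 → G p = a p := by
    intro p h
    simp only [G]
    rw [hγ0 p h, mul_zero, shf_zero, hga p (by linarith)]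
  refine ⟨G, hGC, hGM, hGG, hGU, hGa, ?_⟩
  have stage4 : PH K D' {p | c p ≤ 0} f3 (fun p => toSp D' (tmul i (y p) (G p))) := by
    refine PH.of (fun z => toSp D' (tmul i (y z.2) (shf (z.1 * (M * γ z.2)) (g z.2)))) ?_ ?_ ?_ ?_ ?_
    · refine continuous_toSp D' fun k => CC_tmul ?_ (hyc.comp continuous_snd) k
      refine CC_shf (D := D) (fun k => (hgC k).comp_cont continuous_snd) (fun z => hgM z.2) ?_
      exact (continuous_subtype_val.comp continuous_fst).mul
        (continuous_const.mul (hγc.comp continuous_snd))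
    · rintro ⟨s, p⟩
      refine toSp_mem (MT_tmul hD' _ (MT_shf _ (hgM p))) (Good_tmul hK2 (B := B)
        (Good_shf _ (hgG p)) ?_)
      rcases le_total (c p) (1 / 6) with h | h
      · right
        refine ⟨?_, by simp only [hy]; rw [hyre]; exact hx⟩
        rw [hga p h]
        refine UR_shf (hcol p (by linarith)).2.1 ?_
        have : 0 ≤ (s : ℝ) * (M * γ p) := mul_nonneg s.2.1 (mul_nonneg hMnn (clp_nonneg _))
        linarith
      · left
        simp only [hy]
        rw [hyx' p h]; simp [hx']
    · intro p
      simp only [Set.Icc.coe_zero, zero_mul, shf_zero]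
      rw [hgt p]
      funext k n
      exact toPoly_coeff _ n
    · intro p
      simp [G]
    · intro s p hp
      have h1 : c p ≤ 0 := hp
      simp only
      rw [hγ0 p h1, mul_zero, mul_zero, shf_zero, hgt p]
      funext k n
      exact toPoly_coeff _ n
  have stage5 : PH K D' {p | c p ≤ 0} (fun p => toSp D' (tmul i (y p) (G p)))
      (fun p => toSp D' (tmul i x (G p))) := by
    refine PH.of (fun z => toSp D' (tmul i (x + (((1 - z.1) * γ z.2 : ℝ) : ℂ) * δ) (G z.2)))
      ?_ ?_ ?_ ?_ ?_
    · refine continuous_toSp D' fun k => CC_tmul (fun k => (hGC k).comp_cont continuous_snd) ?_ k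
      refine continuous_const.add (Continuous.mul (Complex.continuous_ofReal.comp ?_)
        continuous_const)
      exact (continuous_const.sub (continuous_subtype_val.comp continuous_fst)).mul
        (hγc.comp continuous_snd)
    · rintro ⟨s, p⟩
      refine toSp_mem (MT_tmul hD' _ (hGM p)) (Good_tmul hK2 (B := B) (hGG p)
        (Or.inr ⟨hGU p, ?_⟩))
      simp only
      rw [hyre]; exact hx
    · intro p; simp [hy]
    · intro p; simp
    · intro s p hp
      have h1 : c p ≤ 0 := hp
      simp [hy, hγ0 p h1]
  exact (((stage1.trans stage2).trans stage3).trans stage4).trans stage5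

end

section
open Polynomial
/-! ### Part 7: transport along `φ` and the conclusion -/

section phi
variable {B : ℝ} {φ : ℂ → ℂ}

lemma phi_inv_left (h : AdmissiblePhi B φ) (z : ℂ) : Function.invFun φ (φ z) = z :=
  Function.leftInverse_invFun h.2.1 z

lemma phi_inv_right (h : AdmissiblePhi B φ) {w : ℂ} (hw : w.re < B) :
    φ (Function.invFun φ w) = w := by
  have : w ∈ Set.range φ := by rw [h.2.2.2.1]; exact hw
  exact Function.invFun_eq this

lemma phi_re (h : AdmissiblePhi B φ) (z : ℂ) : (φ z).re < B := by
  have : φ z ∈ Set.range φ := ⟨z, rfl⟩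
  rw [h.2.2.2.1] at this; exact this

lemma phi_im (h : AdmissiblePhi B φ) (z : ℂ) : (φ z).im = 0 ↔ z.im = 0 := by
  constructor
  · intro hz
    have : φ z ∈ φ '' {z : ℂ | z.im = 0} := by
      rw [h.2.2.2.2]; exact ⟨hz, phi_re h z⟩
    obtain ⟨w, hw, hwz⟩ := this
    rw [← h.2.1 hwz]; exact hw
  · intro hz
    have : φ z ∈ φ '' {z : ℂ | z.im = 0} := ⟨z, hz, rfl⟩
    rw [h.2.2.2.2] at this; exact this.1

lemma phi_inv_contOn (h : AdmissiblePhi B φ) :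
    ContinuousOn (Function.invFun φ) {w : ℂ | w.re < B} := by
  have he : Topology.IsOpenEmbedding φ :=
    Topology.IsOpenEmbedding.of_continuous_injective_isOpenMap h.1 h.2.1 h.2.2.1
  intro w hw
  apply ContinuousAt.continuousWithinAt
  rw [← phi_inv_right h hw, ← he.continuousAt_iff]
  have : Function.invFun φ ∘ φ = id := by funext z; exact phi_inv_left h z
  rw [this]
  exact continuousAt_id

variable {r : ℕ} {K : Set (Finset (Fin r))} {D : Fin r → ℕ}

/-- Apply `rt` to each component. -/
def rts (θ : ℂ → ℂ) (q : Fin r → ℂ[X]) : Fin r → ℂ[X] := fun k => rt θ (q k)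

lemma MT_rts (θ : ℂ → ℂ) {q : Fin r → ℂ[X]} (hq : MT D q) : MT D (rts θ q) := fun k =>
  ⟨rt_monic _ _, by rw [rts, rt_natDegree, (hq k).2]⟩

lemma UR_rts (h : AdmissiblePhi B φ) {q : Fin r → ℂ[X]} (hq : MT D q) : UR B (rts φ q) := by
  intro k z hz
  obtain ⟨w, -, rfl⟩ := (rt_eval_eq_zero (hq k).1).1 hz
  exact phi_re h w

lemma ofReal_of_im {z : ℂ} (h : z.im = 0) : ((z.re : ℝ) : ℂ) = z := by
  apply Complex.ext <;> simp [h]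

lemma Good_rts (hE : ∅ ∈ K) (h : AdmissiblePhi B φ) {q : Fin r → ℂ[X]} (hq : MT D q)
    (hg : Good K q) : Good K (rts φ q) := by
  intro σ hσ t
  by_contra hc
  push Not at hc
  have hne : σ.Nonempty := by
    rw [Finset.nonempty_iff_ne_empty]; rintro rfl; exact hσ hE
  obtain ⟨k0, hk0⟩ := hne
  obtain ⟨z, -, hz2⟩ := (rt_eval_eq_zero (hq k0).1).1 (hc k0 hk0)
  have him : z.im = 0 := by rw [← phi_im h, hz2]; simp
  obtain ⟨k, hk, hne⟩ := hg σ hσ z.re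
  obtain ⟨z', hz1', hz2'⟩ := (rt_eval_eq_zero (hq k).1).1 (hc k hk)
  apply hne
  rw [ofReal_of_im him, h.2.1 (hz2.trans hz2'.symm)]
  exact hz1'

lemma Good_rts_inv (hE : ∅ ∈ K) (h : AdmissiblePhi B φ) {q : Fin r → ℂ[X]} (hq : MT D q)
    (hu : UR B q) (hg : Good K q) : Good K (rts (Function.invFun φ) q) := by
  intro σ hσ t
  by_contra hc
  push Not at hc
  have key : ∀ k ∈ σ, (q k).eval (φ t) = 0 := by
    intro k hk
    obtain ⟨z, hz1, hz2⟩ := (rt_eval_eq_zero (hq k).1).1 (hc k hk)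
    rw [← hz2, phi_inv_right h (hu k z hz1)]; exact hz1
  have him : (φ t).im = 0 := by rw [phi_im h]; simp
  obtain ⟨k, hk, hne⟩ := hg σ hσ (φ t).re
  apply hne
  rw [ofReal_of_im him]
  exact key k hk

lemma rts_inv_left (h : AdmissiblePhi B φ) {q : Fin r → ℂ[X]} (hq : MT D q) :
    rts (Function.invFun φ) (rts φ q) = q := by
  funext k
  unfold rts
  rw [rt_rt]
  exact rt_congr_id (hq k).1 fun z _ => phi_inv_left h z

lemma rts_inv_right (h : AdmissiblePhi B φ) {q : Fin r → ℂ[X]} (hq : MT D q) (hu : UR B q) :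
    rts φ (rts (Function.invFun φ) q) = q := by
  funext k
  unfold rts
  rw [rt_rt]
  exact rt_congr_id (hq k).1 fun z hz => phi_inv_right h (hu k z hz)

/-- The polynomials of a point. -/
def pol (f : ∀ k : Fin r, Fin (D k) → ℂ) : Fin r → ℂ[X] := fun k => toPoly (f k)

lemma Good_pol (f : ↥(PolSp K D)) : Good K (pol f.1) := f.2

lemma MT_pol (f : ∀ k : Fin r, Fin (D k) → ℂ) : MT D (pol f) := MT_toPoly f

lemma toSp_pol (f : ∀ k : Fin r, Fin (D k) → ℂ) : toSp D (pol f) = f := by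
  funext k n; exact toPoly_coeff _ n

lemma pol_toSp {q : Fin r → ℂ[X]} (hq : MT D q) : pol (toSp D q) = q := by
  funext k; exact toPoly_toSp hq k

lemma stab_eq {D' : Fin r → ℕ} {i : Fin r} {x : ℂ}
    (hD' : ∀ k, D' k = if k = i then D k + 1 else D k)
    {s : ↥(PolSp K D) → ↥(PolSp K D')} (hs : StabSpec K φ (fun _ => x) D D' s)
    (f : ↥(PolSp K D)) : (s f).1 = toSp D' (tmul i x (rts φ (pol f.1))) := by
  rw [← toSp_pol (s f).1]
  congr 1
  funext k
  refine (hs f k).trans ?_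
  rw [hD' k]
  unfold tmul rts
  split_ifs with hk
  · rw [Nat.add_sub_cancel_left, pow_one]; rfl
  · rw [Nat.sub_self, pow_zero, mul_one]; rfl

end phi

section cube
variable {ι : Type} [Fintype ι]

/-- The collar-collapsing self map of the interval. -/
def kap1 (s : unitInterval) : unitInterval := Set.projIcc (0 : ℝ) 1 zero_le_one (3 * s - 1)

lemma continuous_kap1 : Continuous kap1 :=
  continuous_projIcc.comp (by fun_prop)

lemma kap1_lo {s : unitInterval} (h : (s : ℝ) ≤ 1 / 3) : kap1 s = 0 :=
  Set.projIcc_of_le_left _ (by linarith)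

lemma kap1_hi {s : unitInterval} (h : 2 / 3 ≤ (s : ℝ)) : kap1 s = 1 :=
  Set.projIcc_of_right_le _ (by linarith)

lemma kap1_zero : kap1 0 = 0 := kap1_lo (by simp)
lemma kap1_one : kap1 1 = 1 := kap1_hi (by norm_num)

/-- The collar-collapsing self map of the cube. -/
def kap (ι : Type) : C(ι → unitInterval, ι → unitInterval) :=
  ⟨fun p j => kap1 (p j), continuous_pi fun j => continuous_kap1.comp (continuous_apply j)⟩

/-- The collar function. -/
def col (p : ι → unitInterval) : ℝ := ∏ j, min 1 (min (3 * (p j : ℝ)) (3 * (1 - (p j : ℝ))))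

lemma continuous_col : Continuous (col (ι := ι)) := by
  unfold col
  refine continuous_finsetProd _ fun j _ => ?_
  have : Continuous fun p : ι → unitInterval => ((p j : unitInterval) : ℝ) :=
    continuous_subtype_val.comp (continuous_apply j)
  fun_prop

lemma kap_boundary {p : ι → unitInterval} (h : p ∈ Cube.boundary ι) :
    kap ι p ∈ Cube.boundary ι := by
  obtain ⟨j, hj | hj⟩ := h
  · exact ⟨j, Or.inl (by show kap1 (p j) = 0; rw [hj, kap1_zero])⟩
  · exact ⟨j, Or.inr (by show kap1 (p j) = 1; rw [hj, kap1_one])⟩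

lemma kap_of_col {p : ι → unitInterval} (h : col p < 1) : kap ι p ∈ Cube.boundary ι := by
  by_contra hc
  have : ∀ j, min 1 (min (3 * (p j : ℝ)) (3 * (1 - (p j : ℝ)))) = 1 := by
    intro j
    apply min_eq_left
    apply le_min
    · by_contra h1
      exact hc ⟨j, Or.inl (kap1_lo (by linarith))⟩
    · by_contra h1
      exact hc ⟨j, Or.inr (kap1_hi (by linarith))⟩
  unfold col at h
  simp only [this, Finset.prod_const_one, lt_irrefl] at h

lemma col_le_zero : {p : ι → unitInterval | col p ≤ 0} = Cube.boundary ι := by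
  ext p
  have hnn : ∀ j, 0 ≤ min 1 (min (3 * (p j : ℝ)) (3 * (1 - (p j : ℝ)))) := by
    intro j
    have := (p j).2.1
    have := (p j).2.2
    refine le_min zero_le_one (le_min (by linarith) (by linarith))
  constructor
  · intro h
    have h0 : col p = 0 := le_antisymm h (Finset.prod_nonneg fun j _ => hnn j)
    obtain ⟨j, -, hj⟩ := Finset.prod_eq_zero_iff.1 h0
    refine ⟨j, ?_⟩
    rcases min_choice (1 : ℝ) (min (3 * (p j : ℝ)) (3 * (1 - (p j : ℝ)))) with h1 | h1
    · rw [h1] at hj; norm_num at hj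
    · rw [h1] at hj
      rcases min_choice (3 * (p j : ℝ)) (3 * (1 - (p j : ℝ))) with h2 | h2
      · left; rw [h2] at hj; apply Subtype.ext; rw [Set.Icc.coe_zero]; linarith
      · right; rw [h2] at hj; apply Subtype.ext; rw [Set.Icc.coe_one]; linarith
  · rintro ⟨j, hj⟩
    have : col p = 0 := by
      apply Finset.prod_eq_zero (Finset.mem_univ j)
      rcases hj with hj | hj <;> rw [hj] <;> simp
    exact this.le

lemma kap_homotopic {Y : Type*} [TopologicalSpace Y] (f : C(ι → unitInterval, Y)) {y : Y}
    (hf : ∀ p ∈ Cube.boundary ι, f p = y) :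
    f.HomotopicRel (f.comp (kap ι)) (Cube.boundary ι) := by
  have hc : Continuous fun z : unitInterval × (ι → unitInterval) => fun j : ι =>
      Set.projIcc (0 : ℝ) 1 zero_le_one
        ((1 - (z.1 : ℝ)) * (z.2 j : ℝ) + (z.1 : ℝ) * (3 * (z.2 j : ℝ) - 1)) := by
    refine continuous_pi fun j => continuous_projIcc.comp ?_
    have h1 : Continuous fun z : unitInterval × (ι → unitInterval) => (z.1 : ℝ) :=
      continuous_subtype_val.comp continuous_fst
    have h2 : Continuous fun z : unitInterval × (ι → unitInterval) => ((z.2 j : unitInterval) : ℝ) :=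
      continuous_subtype_val.comp ((continuous_apply j).comp continuous_snd)
    fun_prop
  refine ⟨⟨⟨⟨fun z => f fun j => Set.projIcc (0 : ℝ) 1 zero_le_one
        ((1 - (z.1 : ℝ)) * (z.2 j : ℝ) + (z.1 : ℝ) * (3 * (z.2 j : ℝ) - 1)),
        f.continuous.comp hc⟩, ?_, ?_⟩, ?_⟩⟩
  · intro p
    show f _ = f p
    congr 1
    funext j
    simp
  · intro p
    show f _ = f _
    congr 1
    funext j
    simp [kap, kap1]
  · intro t p hp
    show f _ = f p
    rw [hf p hp]
    apply hf
    obtain ⟨j, hj⟩ := hp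
    have := t.2.1
    refine ⟨j, ?_⟩
    rcases hj with hj | hj
    · left; apply Set.projIcc_of_le_left; dsimp only; rw [hj, Set.Icc.coe_zero]; linarith
    · right; apply Set.projIcc_of_right_le; dsimp only; rw [hj, Set.Icc.coe_one]; linarith

end cube

section final
variable {r : ℕ} {K : Set (Finset (Fin r))} {D D' : Fin r → ℕ} {i : Fin r} {B : ℝ} {φ : ℂ → ℂ}

lemma cube_lift {ι : Type} [Fintype ι] (hE : ∅ ∈ K) {ρ m : ℕ} (hρ : 1 ≤ ρ) (hm0 : 1 ≤ m)
    (hK : ∀ σ, σ ∉ K → ρ + 1 ≤ σ.card) (hD' : ∀ k, D' k = if k = i then D k + 1 else D k)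
    (hm : ∀ k, m ≤ D k) (hdim : Fintype.card ι < 2 * m * ρ) {x : ℂ} (hx : B < x.re)
    (hφ : AdmissiblePhi B φ) (s : C(↥(PolSp K D), ↥(PolSp K D')))
    (hs : StabSpec K φ (fun _ => x) D D' s)
    (f : C(ι → unitInterval, ↥(PolSp K D')))
    (a : (ι → unitInterval) → Fin r → ℂ[X]) (haC : ∀ k, CC fun p => a p k)
    (haM : ∀ p, MT D (a p)) (e : (ι → unitInterval) → ↥(PolSp K D))
    (he : ∀ p ∈ Cube.boundary ι, a p = rts φ (pol (e p).1) ∧ f p = s (e p)) :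
    ∃ E : C(ι → unitInterval, ↥(PolSp K D)), (∀ p ∈ Cube.boundary ι, E p = e (kap ι p)) ∧
      (f.comp (kap ι)).HomotopicRel (s.comp E) (Cube.boundary ι) := by
  have hkc := (kap ι).continuous
  obtain ⟨G, hGC, hGM, hGG, hGU, hGa, F0, F1, hF0, hF1, hF⟩ :=
    main_deform hE hρ hm0 hK hD' hm hdim hx (fun p => (f (kap ι p)).1)
      (continuous_subtype_val.comp (f.continuous.comp hkc)) (fun p => (f (kap ι p)).2)
      (fun p => a (kap ι p)) (fun k => (haC k).comp_cont hkc) (fun p => haM _) col continuous_col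
      (by
        intro p hp
        obtain ⟨h1, h2⟩ := he _ (kap_of_col hp)
        rw [h1, h2]
        exact ⟨Good_rts hE hφ (MT_pol _) (Good_pol _), UR_rts hφ (MT_pol (D := D) _),
          stab_eq hD' hs _⟩)
  have hEc : Continuous fun p => toSp D (rts (Function.invFun φ) (G p)) :=
    continuous_toSp D fun k => CC.rt (hGC k) (fun p => (hGM p k).1) (fun p => (hGM p k).2)
      (U := {w : ℂ | w.re < B}) (fun p z hz => hGU p k z hz) (phi_inv_contOn hφ)
  let E : C(ι → unitInterval, ↥(PolSp K D)) :=
    ⟨fun p => ⟨toSp D (rts (Function.invFun φ) (G p)), toSp_mem (MT_rts _ (hGM p))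
      (Good_rts_inv hE hφ (hGM p) (hGU p) (hGG p))⟩, hEc.subtype_mk _⟩
  have hEv : ∀ p, (E p).1 = toSp D (rts (Function.invFun φ) (G p)) := fun p => rfl
  refine ⟨E, ?_, ?_⟩
  · intro p hp
    have hp' : col p ≤ 0 := by rw [← col_le_zero] at hp; exact hp
    apply Subtype.ext
    rw [hEv, hGa p hp', (he _ (kap_boundary hp)).1, rts_inv_left (D := D) hφ (MT_pol _), toSp_pol]
  · have e0 : F0 = f.comp (kap ι) := by
      ext1 p; apply Subtype.ext; rw [hF0]; rfl
    have e1 : F1 = s.comp E := by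
      ext1 p; apply Subtype.ext; rw [hF1]
      rw [ContinuousMap.comp_apply, stab_eq hD' hs, hEv, pol_toSp (MT_rts _ (hGM p)),
        rts_inv_right hφ (hGM p) (hGU p)]
    rw [e0, e1, col_le_zero] at hF
    exact hF

theorem pi_bij (hE : ∅ ∈ K) {ρ m : ℕ} (hρ : 1 ≤ ρ) (hm0 : 1 ≤ m)
    (hK : ∀ σ, σ ∉ K → ρ + 1 ≤ σ.card) (hD' : ∀ k, D' k = if k = i then D k + 1 else D k)
    (hm : ∀ k, m ≤ D k) {x : ℂ} (hx : B < x.re)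
    (hφ : AdmissiblePhi B φ) (s : C(↥(PolSp K D), ↥(PolSp K D')))
    (hs : StabSpec K φ (fun _ => x) D D' s) (k : ℕ) (hdim : k + 1 < 2 * m * ρ)
    (x0 : ↥(PolSp K D)) : Function.Bijective (piMap k s x0) := by
  have hsurj : Function.Surjective (piMap k s x0) := by
    intro α
    induction α using Quotient.inductionOn with
    | _ F =>
    obtain ⟨E, hE1, hE2⟩ := cube_lift (ι := Fin k) hE hρ hm0 hK hD' hm
      (by rw [Fintype.card_fin]; omega) hx hφ s hs F.1 (fun _ => rts φ (pol x0.1))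
      (fun _ => CC_const _) (fun _ => MT_rts _ (MT_pol _)) (fun _ => x0)
      (fun p hp => ⟨rfl, F.2 p hp⟩)
    refine ⟨Quotient.mk _ ⟨E, hE1⟩, ?_⟩
    apply Quotient.sound
    show (s.comp E).HomotopicRel F.1 (Cube.boundary (Fin k))
    exact ((kap_homotopic F.1 F.2).trans hE2).symm
  refine ⟨?_, hsurj⟩
  intro α β
  induction α using Quotient.inductionOn with
  | _ F0 =>
  induction β using Quotient.inductionOn with
  | _ F1 =>
  intro hab
  have hH : (s.comp F0.1).HomotopicRel (s.comp F1.1) (Cube.boundary (Fin k)) := Quotient.exact hab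
  obtain ⟨H⟩ := hH
  have hbF0 : ∀ p ∈ Cube.boundary (Fin k), F0.1 p = x0 := F0.2
  have hbF1 : ∀ p ∈ Cube.boundary (Fin k), F1.1 p = x0 := F1.2
  let pr : (Option (Fin k) → unitInterval) → (Fin k → unitInterval) := fun q j => q (some j)
  have hpr : Continuous pr := continuous_pi fun j => continuous_apply _
  let f : C(Option (Fin k) → unitInterval, ↥(PolSp K D')) :=
    ⟨fun q => H (q none, pr q), H.continuous.comp ((continuous_apply none).prodMk hpr)⟩
  let v : C(Fin k → unitInterval, ↥(PolSp K D)) → (Option (Fin k) → unitInterval) →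
    ∀ k, Fin (D k) → ℂ := fun F q => toSp D (rts φ (pol (F (pr q)).1))
  have hv : ∀ F, Continuous (v F) := by
    intro F
    refine continuous_toSp D fun j => CC.rt (d := D j) (U := Set.univ)
      (CC_toPoly (a := fun q => (F (pr q)).1 j) ?_) (fun p => toPoly_monic _)
      (fun p => toPoly_natDegree _) (fun _ _ _ => trivial) hφ.1.continuousOn
    exact (continuous_apply j).comp (continuous_subtype_val.comp (F.continuous.comp hpr))
  let w : (Option (Fin k) → unitInterval) → ∀ k, Fin (D k) → ℂ := fun q =>
    (1 - (((q none : unitInterval) : ℝ) : ℂ)) • v F0.1 q + (((q none : unitInterval) : ℝ) : ℂ) • v F1.1 q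
  have hτ : Continuous fun q : Option (Fin k) → unitInterval => (((q none : unitInterval) : ℝ) : ℂ) :=
    Complex.continuous_ofReal.comp (continuous_subtype_val.comp (continuous_apply none))
  have hw : Continuous w :=
    ((continuous_const.sub hτ).smul (hv _)).add (hτ.smul (hv _))
  let e : (Option (Fin k) → unitInterval) → ↥(PolSp K D) := fun q =>
    if q none = 0 then F0.1 (pr q) else if q none = 1 then F1.1 (pr q) else x0
  have hebd : ∀ q, pr q ∈ Cube.boundary (Fin k) → e q = x0 := by
    intro q hq
    simp only [e]
    rw [hbF0 _ hq, hbF1 _ hq]; simp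
  have he0 : ∀ q, q none = 0 → e q = F0.1 (pr q) := fun q hq => by simp only [e]; rw [if_pos hq]
  have he1 : ∀ q, q none = 1 → e q = F1.1 (pr q) := fun q hq => by
    simp only [e]; rw [if_neg (by rw [hq]; exact one_ne_zero), if_pos hq]
  have hpv : ∀ y : ↥(PolSp K D), pol (toSp D (rts φ (pol y.1))) = rts φ (pol y.1) :=
    fun y => pol_toSp (MT_rts _ (MT_pol _))
  obtain ⟨E, hE1, -⟩ := cube_lift (ι := Option (Fin k)) hE hρ hm0 hK hD' hm
      (by rw [Fintype.card_option, Fintype.card_fin]; omega) hx hφ s hs f (fun q => pol (w q))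
      (fun j => CC_toPoly ((continuous_apply j).comp hw)) (fun _ => MT_pol _) e (by
        rintro q ⟨j, hj⟩
        rcases j with _ | j
        · rcases hj with hj | hj
          · constructor
            · rw [he0 q hj, ← hpv]
              simp [w, hj, v]
            · rw [he0 q hj]
              show H (q none, pr q) = _
              rw [hj, H.apply_zero]; rfl
          · constructor
            · rw [he1 q hj, ← hpv]
              simp [w, hj, v]
            · rw [he1 q hj]
              show H (q none, pr q) = _
              rw [hj, H.apply_one]; rfl
        · have hb : pr q ∈ Cube.boundary (Fin k) := ⟨j, hj⟩
          rw [hebd q hb]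
          constructor
          · rw [← hpv]
            congr 1
            simp only [w, v]
            rw [hbF0 _ hb, hbF1 _ hb, ← add_smul]
            simp
          · show H (q none, pr q) = _
            rw [H.eq_fst _ hb, ContinuousMap.comp_apply, hbF0 _ hb])
  have main : (F0.1.comp (kap (Fin k))).HomotopicRel (F1.1.comp (kap (Fin k)))
      (Cube.boundary (Fin k)) := by
    have hj : Continuous fun z : unitInterval × (Fin k → unitInterval) =>
        (fun o : Option (Fin k) => o.elim z.1 z.2) := by
      refine continuous_pi fun o => ?_
      rcases o with _ | j
      · exact continuous_fst
      · exact (continuous_apply j).comp continuous_snd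
    refine ⟨⟨⟨⟨fun z => E fun o => o.elim z.1 z.2, E.continuous.comp hj⟩, ?_, ?_⟩, ?_⟩⟩
    · intro p
      show E (fun o => o.elim 0 p) = _
      rw [hE1 _ ⟨none, Or.inl rfl⟩, he0 _ kap1_zero]
      rfl
    · intro p
      show E (fun o => o.elim 1 p) = _
      rw [hE1 _ ⟨none, Or.inr rfl⟩, he1 _ kap1_one]
      rfl
    · intro t p hp
      show E (fun o => o.elim t p) = F0.1 (kap (Fin k) p)
      have hb : (fun o : Option (Fin k) => o.elim t p) ∈ Cube.boundary (Option (Fin k)) := by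
        obtain ⟨j, hj⟩ := hp
        exact ⟨some j, hj⟩
      rw [hE1 _ hb, hbF0 _ (kap_boundary hp)]
      exact hebd _ (kap_boundary hp)
  apply Quotient.sound
  show F0.1.HomotopicRel F1.1 (Cube.boundary (Fin k))
  exact ((kap_homotopic F0.1 F0.2).trans main).trans (kap_homotopic F1.1 F1.2).symm

lemma rmin_le {σ : Finset (Fin r)} (hσ : σ ∉ K) : rmin K ≤ σ.card := by
  induction σ using Finset.strongInduction with
  | H σ ih =>
  by_cases h : ∀ t ⊂ σ, t ∈ K
  · exact Nat.sInf_le ⟨σ, ⟨hσ, h⟩, rfl⟩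
  · push Not at h
    obtain ⟨t, ht, htK⟩ := h
    exact (ih t ht htK).trans (Finset.card_le_card ht.subset)

theorem final (hE : ∅ ∈ K) (hD' : ∀ k, D' k = if k = i then D k + 1 else D k)
    (hD : ∀ k, 0 < D k) {x : ℂ} (hx : B < x.re)
    (hφ : AdmissiblePhi B φ) (s : C(↥(PolSp K D), ↥(PolSp K D')))
    (hs : StabSpec K φ (fun _ => x) D D' s) : HomotopyEquivThrough s (dBound K D) := by
  intro x0 k hk
  have hm : ∀ k, dmin D ≤ D k := fun k => Nat.sInf_le ⟨k, rfl⟩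
  have hm0 : 1 ≤ dmin D := by
    obtain ⟨j, hj⟩ := Nat.sInf_mem (s := Set.range D) ⟨_, i, rfl⟩
    have := hD j
    unfold dmin
    omega
  unfold dBound at hk
  have hr : 2 ≤ rmin K := by
    by_contra h
    have h1 : (rmin K : ℤ) - 1 ≤ 0 := by omega
    have h2 : (0 : ℤ) ≤ dmin D := by positivity
    have := mul_nonpos_of_nonpos_of_nonneg h1 h2
    nlinarith
  obtain ⟨ρ, hρ⟩ : ∃ ρ, rmin K = ρ + 1 := ⟨rmin K - 1, by omega⟩
  refine pi_bij (ρ := ρ) (m := dmin D) hE (by omega) hm0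
    (fun σ hσ => by rw [← hρ]; exact rmin_le hσ) hD' hm hx hφ s hs k ?_ x0
  rw [hρ] at hk
  push_cast at hk
  zify
  nlinarith

end final

end

/-- The stabilization map
`s_{D,i} : Pol*_D(S¹,X_Σ) → Pol*_{D+e_i}(S¹,X_Σ)` is a homotopy equivalence through
dimension `d(D,Σ) = 2(r_min(Σ)−1)d_min − 2`, for any admissible choice of `(φ_D, x_D)`. -/
theorem stabilization_single_homotopyEquiv_through
    {n r : ℕ} (F : Fan n) (N : Fin r → Fin n → ℤ)
    (hPG : IsPrimGens F N) (h1 : Cond1 N) (h2 : Cond2 N)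
    (D : Fin r → ℕ) (hD : ∀ k, 0 < D k) (i : Fin r)
    (φ : ℂ → ℂ) (hφ : AdmissiblePhi ((∑ k, D k : ℕ) : ℝ) φ)
    (x : ℂ) (hx : ((∑ k, D k : ℕ) : ℝ) < x.re)
    (s : C(↥(PolSp (KC F N) D),
        ↥(PolSp (KC F N) fun k => if k = i then D k + 1 else D k)))
    (hs : StabSpec (KC F N) φ (fun _ => x) D
        (fun k => if k = i then D k + 1 else D k) ⇑s) :
    HomotopyEquivThrough s (dBound (KC F N) D) := by
  exact final (empty_mem_KC F N) (fun _ => rfl) hD hx hφ s hs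

end Toric
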